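/- arXiv:1711.10099 — 2 statements merged into one kernel-verified Lean document; each statement's English description precedes it below -/
import Mathlib

section
/- Let Δ₃ be the convex hull of {(0,3),(3,0),(−3,−3)} in ℝ² and let k ≥ 1 be an integer. For every W₃-invariant function g ∈ PL(Δ₃;k) one has (1/vol(kΔ₃))·∫_{kΔ₃} g dA ≥ (1/|kΔ₃ ∩ ℤ²|)·Σ_{x ∈ kΔ₃ ∩ ℤ²} g(x), with equality if and only if g is affine on kΔ₃. -/
open MeasureTheory Pointwise

noncomputable section

/-- The lattice points of `ℝ²`: points with integer coordinates. -/
def lat : Set (ℝ × ℝ) := {x | ∃ m n : ℤ, x = ((m : ℝ), (n : ℝ))}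

/-- `g` belongs to `PL(Δ;k)` (with `D = kΔ`): there is `φ` on the lattice points of `D`
such that `g x` is the height of the upper boundary of the convex hull of the subgraphs. -/
def IsPL (D : Set (ℝ × ℝ)) (g : ℝ × ℝ → ℝ) : Prop :=
  ∃ φ : ℝ × ℝ → ℝ, ∀ x ∈ D,
    g x = sSup {t : ℝ |
      (x, t) ∈ convexHull ℝ {p : (ℝ × ℝ) × ℝ | p.1 ∈ D ∩ lat ∧ p.2 ≤ φ p.1}}

/-- `g` is affine on `D`: restriction of a linear map plus a constant. -/
def IsAffineOn (D : Set (ℝ × ℝ)) (g : ℝ × ℝ → ℝ) : Prop :=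
  ∃ (l : (ℝ × ℝ) →ₗ[ℝ] ℝ) (c : ℝ), ∀ x ∈ D, g x = l x + c

/-- The moment polytope of the cubic surface `X₃`. -/
def Δ₃ : Set (ℝ × ℝ) := convexHull ℝ {((0 : ℝ), (3 : ℝ)), (3, 0), (-3, -3)}

/-- The generator `[[0,-1],[1,-1]]` of the Weyl group `W₃`, acting on `ℝ²`. -/
def σ₃ : ℝ × ℝ → ℝ × ℝ := fun p => (-p.2, p.1 - p.2)

/-- The swap `[[0,1],[1,0]]`, the second generator of `W₃`. -/
def sw : ℝ × ℝ → ℝ × ℝ := fun p => (p.2, p.1)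

/-- The triangle with vertices `(0,n)`, `(n,0)`, `(-n,-n)` by inequalities. -/
def Dn (n : ℝ) : Set (ℝ × ℝ) := {p | p.1 + p.2 ≤ n ∧ p.2 - 2 * p.1 ≤ n ∧ p.1 - 2 * p.2 ≤ n}

lemma convex_Dn (n : ℝ) : Convex ℝ (Dn n) := by
  intro x hx y hy a b ha hb hab
  obtain ⟨h1, h2, h3⟩ := hx
  obtain ⟨g1, g2, g3⟩ := hy
  have hb' : b = 1 - a := by linarith
  refine ⟨?_, ?_, ?_⟩ <;> simp only [Prod.fst_add, Prod.snd_add, Prod.smul_fst, Prod.smul_snd,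
    smul_eq_mul]
  · nlinarith [mul_le_mul_of_nonneg_left h1 ha, mul_le_mul_of_nonneg_left g1 hb]
  · nlinarith [mul_le_mul_of_nonneg_left h2 ha, mul_le_mul_of_nonneg_left g2 hb]
  · nlinarith [mul_le_mul_of_nonneg_left h3 ha, mul_le_mul_of_nonneg_left g3 hb]

lemma Dn_bary {n : ℝ} (hn : 0 < n) {p : ℝ × ℝ} (hp : p ∈ Dn n) :
    ∃ a b c : ℝ, 0 ≤ a ∧ 0 ≤ b ∧ 0 ≤ c ∧ a + b + c = 1 ∧
      p = a • ((0 : ℝ), n) + b • (n, (0 : ℝ)) + c • (-n, -n) := by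
  obtain ⟨h1, h2, h3⟩ := hp
  refine ⟨(n + 2 * p.2 - p.1) / (3 * n), (n + 2 * p.1 - p.2) / (3 * n),
    (n - p.1 - p.2) / (3 * n), ?_, ?_, ?_, ?_, ?_⟩
  · apply div_nonneg <;> linarith
  · apply div_nonneg <;> linarith
  · apply div_nonneg <;> linarith
  · field_simp; ring
  · ext <;> simp <;> field_simp <;> ring

lemma comb3_mem {s : Set (ℝ × ℝ)} (hs : Convex ℝ s) {x y z : ℝ × ℝ} (hx : x ∈ s) (hy : y ∈ s)
    (hz : z ∈ s) {a b c : ℝ} (ha : 0 ≤ a) (hb : 0 ≤ b) (hc : 0 ≤ c) (h : a + b + c = 1) :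
    a • x + b • y + c • z ∈ s := by
  have := hs.sum_mem (t := Finset.univ) (w := ![a, b, c]) (z := ![x, y, z])
    (by intro i _; fin_cases i <;> simpa) (by simpa [Fin.sum_univ_three] using h)
    (by intro i _; fin_cases i <;> simpa)
  simpa [Fin.sum_univ_three] using this

lemma convex3 {s : Set (ℝ × ℝ)} {F : ℝ × ℝ → ℝ} (hF : ConvexOn ℝ s F) {x y z : ℝ × ℝ}
    (hx : x ∈ s) (hy : y ∈ s)
    (hz : z ∈ s) {a b c : ℝ} (ha : 0 ≤ a) (hb : 0 ≤ b) (hc : 0 ≤ c) (h : a + b + c = 1) :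
    F (a • x + b • y + c • z) ≤ a * F x + b * F y + c * F z := by
  have := hF.map_sum_le (t := Finset.univ) (w := ![a, b, c]) (p := ![x, y, z])
    (by intro i _; fin_cases i <;> simpa) (by simpa [Fin.sum_univ_three] using h)
    (by intro i _; fin_cases i <;> simpa)
  simpa [Fin.sum_univ_three] using this

lemma Dn_corners {n : ℝ} (hn : 0 ≤ n) :
    ((0 : ℝ), n) ∈ Dn n ∧ (n, (0 : ℝ)) ∈ Dn n ∧ (-n, -n) ∈ Dn n := by
  refine ⟨⟨?_, ?_, ?_⟩, ⟨?_, ?_, ?_⟩, ⟨?_, ?_, ?_⟩⟩ <;> simp <;> linarith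

lemma D_eq (k : ℕ) (hk : 1 ≤ k) : (k : ℝ) • Δ₃ = Dn (3 * k) := by
  have hk' : (0 : ℝ) < k := by exact_mod_cast hk
  have hn : (0 : ℝ) < 3 * k := by linarith
  unfold Δ₃
  rw [← convexHull_smul]
  have hset : (k : ℝ) • ({((0 : ℝ), (3 : ℝ)), (3, 0), (-3, -3)} : Set (ℝ × ℝ)) =
      {((0 : ℝ), (3 * (k : ℝ))), (3 * (k : ℝ), (0 : ℝ)), (-(3 * (k : ℝ)), -(3 * (k : ℝ)))} := by
    simp only [Set.smul_set_insert, Set.smul_set_singleton, Prod.smul_mk, smul_eq_mul, mul_zero,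
      mul_neg, mul_comm]
  rw [hset]
  obtain ⟨c1, c2, c3⟩ := Dn_corners hn.le
  apply Set.Subset.antisymm
  · apply convexHull_min _ (convex_Dn _)
    intro p hp
    simp only [Set.mem_insert_iff, Set.mem_singleton_iff] at hp
    rcases hp with rfl | rfl | rfl <;> assumption
  · intro p hp
    obtain ⟨a, b, c, ha, hb, hc, h, rfl⟩ := Dn_bary hn hp
    apply comb3_mem (convex_convexHull ℝ _) _ _ _ ha hb hc h <;>
      apply subset_convexHull <;> simp

lemma Dn_bdd {n : ℝ} {p : ℝ × ℝ} (hp : p ∈ Dn n) :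
    (-n ≤ p.1 ∧ p.1 ≤ n) ∧ (-n ≤ p.2 ∧ p.2 ≤ n) := by
  obtain ⟨h1, h2, h3⟩ := hp
  refine ⟨⟨?_, ?_⟩, ⟨?_, ?_⟩⟩ <;> linarith

lemma lat_finite (n : ℝ) : (Dn n ∩ lat).Finite := by
  obtain ⟨M, hM⟩ := exists_nat_ge n
  have : (Dn n ∩ lat) ⊆ (fun q : ℤ × ℤ => ((q.1 : ℝ), (q.2 : ℝ))) ''
      (Set.Icc (-(M : ℤ)) M ×ˢ Set.Icc (-(M : ℤ)) M) := by
    rintro p ⟨hp, a, b, rfl⟩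
    obtain ⟨⟨h1, h2⟩, h3, h4⟩ := Dn_bdd hp
    refine ⟨(a, b), ⟨⟨?_, ?_⟩, ⟨?_, ?_⟩⟩, rfl⟩ <;> simp only at *
    · have : (-(M : ℝ)) ≤ a := by linarith
      exact_mod_cast this
    · have : (a : ℝ) ≤ M := by linarith
      exact_mod_cast this
    · have : (-(M : ℝ)) ≤ b := by linarith
      exact_mod_cast this
    · have : (b : ℝ) ≤ M := by linarith
      exact_mod_cast this
  refine Set.Finite.subset ?_ this
  apply Set.Finite.image
  exact (Set.finite_Icc _ _).prod (Set.finite_Icc _ _)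

lemma PL_concave (m : ℕ) (hm : 1 ≤ m) (g : ℝ × ℝ → ℝ) (h : IsPL (Dn m) g) :
    ConcaveOn ℝ (Dn m) g := by
  have hn : (0 : ℝ) < m := by exact_mod_cast hm
  obtain ⟨φ, hφ⟩ := h
  set P : Set ((ℝ × ℝ) × ℝ) := {p | p.1 ∈ Dn m ∩ lat ∧ p.2 ≤ φ p.1} with hP
  obtain ⟨M, hM⟩ := ((lat_finite (m : ℝ)).image φ).bddAbove
  have hbd : ∀ x, BddAbove {t : ℝ | (x, t) ∈ convexHull ℝ P} := by
    intro x
    refine ⟨M, ?_⟩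
    intro t ht
    have hsub : convexHull ℝ P ⊆ {p : (ℝ × ℝ) × ℝ | p.2 ≤ M} := by
      apply convexHull_min
      · rintro p ⟨hp1, hp2⟩
        exact hp2.trans (hM ⟨p.1, hp1, rfl⟩)
      · exact convex_halfSpace_le (LinearMap.snd ℝ (ℝ × ℝ) ℝ).isLinear M
    exact hsub ht
  have hne : ∀ x ∈ Dn m, {t : ℝ | (x, t) ∈ convexHull ℝ P}.Nonempty := by
    intro x hx
    obtain ⟨a, b, c, ha, hb, hc, habc, rfl⟩ := Dn_bary hn hx
    obtain ⟨c1, c2, c3⟩ := Dn_corners hn.le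
    refine ⟨a * φ (0, m) + b * φ (m, 0) + c * φ (-m, -m), ?_⟩
    have q1 : (((0 : ℝ), (m : ℝ)), φ (0, m)) ∈ convexHull ℝ P := by
      apply subset_convexHull
      exact ⟨⟨c1, 0, m, by simp⟩, le_rfl⟩
    have q2 : (((m : ℝ), (0 : ℝ)), φ (m, 0)) ∈ convexHull ℝ P := by
      apply subset_convexHull
      exact ⟨⟨c2, m, 0, by simp⟩, le_rfl⟩
    have q3 : ((-(m : ℝ), -(m : ℝ)), φ (-m, -m)) ∈ convexHull ℝ P := by
      apply subset_convexHull
      exact ⟨⟨c3, -m, -m, by simp⟩, le_rfl⟩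
    have := (convex_convexHull ℝ P).sum_mem (t := Finset.univ) (w := ![a, b, c])
      (z := ![(((0 : ℝ), (m : ℝ)), φ (0, m)), (((m : ℝ), (0 : ℝ)), φ (m, 0)),
        ((-(m : ℝ), -(m : ℝ)), φ (-m, -m))])
      (by intro i _; fin_cases i <;> simpa) (by simpa [Fin.sum_univ_three] using habc)
      (by intro i _; fin_cases i <;> assumption)
    simpa [Fin.sum_univ_three] using this
  refine ⟨convex_Dn _, ?_⟩
  intro x hx y hy a b ha hb hab
  rw [hφ x hx, hφ y hy, hφ _ (convex_Dn _ hx hy ha hb hab)]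
  simp only [smul_eq_mul]
  refine le_of_forall_pos_lt_add fun ε hε => ?_
  obtain ⟨s, hs, hs'⟩ := exists_lt_of_lt_csSup (hne x hx)
    (sub_lt_self (sSup {t : ℝ | (x, t) ∈ convexHull ℝ P}) hε)
  obtain ⟨t, ht, ht'⟩ := exists_lt_of_lt_csSup (hne y hy)
    (sub_lt_self (sSup {t : ℝ | (y, t) ∈ convexHull ℝ P}) hε)
  have hmem : (a • x + b • y, a * s + b * t) ∈ convexHull ℝ P := by
    have := (convex_convexHull ℝ P) hs ht ha hb hab
    simpa using this
  have hle := le_csSup (hbd (a • x + b • y)) hmem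
  have hb' : b = 1 - a := by linarith
  set X := sSup {t : ℝ | (x, t) ∈ convexHull ℝ P}
  set Y := sSup {t : ℝ | (y, t) ∈ convexHull ℝ P}
  have : a * X + b * Y < a * (s + ε) + b * (t + ε) := by
    rcases ha.eq_or_lt with rfl | ha'
    · have : b = 1 := by linarith
      subst this; linarith
    · have := mul_lt_mul_of_pos_left hs' ha'
      have := mul_le_mul_of_nonneg_left ht'.le hb
      nlinarith
  have e : a * (s + ε) + b * (t + ε) = a * s + b * t + ε := by rw [hb']; ring
  linarith

lemma σ_mem {n : ℝ} {p : ℝ × ℝ} (hp : p ∈ Dn n) : σ₃ p ∈ Dn n := by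
  obtain ⟨h1, h2, h3⟩ := hp
  refine ⟨?_, ?_, ?_⟩ <;> simp only [σ₃] <;> linarith

lemma sw_mem {n : ℝ} {p : ℝ × ℝ} (hp : p ∈ Dn n) : sw p ∈ Dn n := by
  obtain ⟨h1, h2, h3⟩ := hp
  refine ⟨?_, ?_, ?_⟩ <;> simp only [sw] <;> linarith

/-- The working hypotheses on `F = g(0) - g`. -/
structure Good (n : ℝ) (F : ℝ × ℝ → ℝ) : Prop where
  conv : ConvexOn ℝ (Dn n) F
  zero : F 0 = 0
  inv : ∀ x ∈ Dn n, F (σ₃ x) = F x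
  invs : ∀ x ∈ Dn n, F (sw x) = F x

lemma σ_sum (x : ℝ × ℝ) :
    (1 / 3 : ℝ) • x + (1 / 3 : ℝ) • σ₃ x + (1 / 3 : ℝ) • σ₃ (σ₃ x) = 0 := by
  ext <;> simp [σ₃] <;> ring

lemma Good.nonneg {n : ℝ} {F : ℝ × ℝ → ℝ} (h : Good n F) {x : ℝ × ℝ} (hx : x ∈ Dn n) :
    0 ≤ F x := by
  have := convex3 h.conv hx (σ_mem hx) (σ_mem (σ_mem hx)) (a := 1 / 3) (b := 1 / 3) (c := 1 / 3)
    (by norm_num) (by norm_num) (by norm_num) (by norm_num)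
  rw [σ_sum, h.zero, h.inv _ (σ_mem hx), h.inv _ hx] at this
  linarith

lemma Good.le_corner {n : ℝ} (hn : 0 < n) {F : ℝ × ℝ → ℝ} (h : Good n F) {x : ℝ × ℝ}
    (hx : x ∈ Dn n) : F x ≤ F (n, 0) := by
  obtain ⟨c1, c2, c3⟩ := Dn_corners hn.le
  obtain ⟨a, b, c, ha, hb, hc, habc, rfl⟩ := Dn_bary hn hx
  have := convex3 h.conv c1 c2 c3 ha hb hc habc
  have e1 : F (0, n) = F (n, 0) := by
    have := h.inv _ c2
    simpa [σ₃] using this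
  have e2 : F (-n, -n) = F (n, 0) := by
    have := h.inv _ c1
    rw [e1] at this
    simpa [σ₃] using this
  rw [e1, e2] at this
  calc _ ≤ _ := this
    _ = (a + b + c) * F (n, 0) := by ring
    _ = _ := by rw [habc, one_mul]

lemma nat_mem {n : ℕ} {a b : ℕ} (h : a + b ≤ n) : ((a : ℝ), (b : ℝ)) ∈ Dn n := by
  have : (a : ℝ) + b ≤ n := by exact_mod_cast h
  have ha : (0 : ℝ) ≤ a := by positivity
  have hb : (0 : ℝ) ≤ b := by positivity
  refine ⟨?_, ?_, ?_⟩ <;> simp only <;> linarith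

lemma Good.radial {n : ℕ} {F : ℝ × ℝ → ℝ} (h : Good n F) {a b : ℕ} (hab : a + b < n)
    (hba : b ≤ a) :
    (n : ℝ) * F (a, b) ≤ ((a : ℝ) + b) * F ((n - b : ℕ), b) := by
  have hn : (0 : ℝ) < n := by
    have : 0 < n := by omega
    exact_mod_cast this
  have hab' : (a : ℝ) + b < n := by exact_mod_cast hab
  have hba' : (b : ℝ) ≤ a := by exact_mod_cast hba
  have hb0 : (0 : ℝ) ≤ b := by positivity
  have hd : (0 : ℝ) < n - 2 * b := by linarith
  have m1 : (((n - b : ℕ) : ℝ), (b : ℝ)) ∈ Dn n := nat_mem (by omega)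
  have m2 : ((b : ℝ), ((n - b : ℕ) : ℝ)) ∈ Dn n := nat_mem (by omega)
  have m0 : (0 : ℝ × ℝ) ∈ Dn n := by
    simpa [Prod.zero_eq_mk] using nat_mem (n := n) (a := 0) (b := 0) (by omega)
  have e2 : F ((b : ℝ), ((n - b : ℕ) : ℝ)) = F (((n - b : ℕ) : ℝ), (b : ℝ)) := by
    have := h.invs _ m1
    simpa [sw] using this
  have hc : ((n - b : ℕ) : ℝ) = n - b := by rw [Nat.cast_sub (by omega)]
  set d : ℝ := (a - b) / (n - 2 * b) with hdd
  have hd2 : d * (n - 2 * b) = a - b := by rw [hdd]; exact div_mul_cancel₀ _ hd.ne'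
  set s : ℝ := (a + b) / n with hss
  have hs2 : s * n = a + b := by rw [hss]; field_simp
  have hd0 : 0 ≤ d := div_nonneg (by linarith) hd.le
  have hs1 : s ≤ 1 := by rw [hss, div_le_one hn]; linarith
  have hds : d ≤ s := by
    rw [hdd, hss, div_le_div_iff₀ hd hn]
    nlinarith
  have := convex3 h.conv m1 m2 m0 (a := (s + d) / 2) (b := (s - d) / 2) (c := 1 - s)
    (by linarith) (by linarith) (by linarith) (by ring)
  have e3 : ((s + d) / 2) • (((n - b : ℕ) : ℝ), (b : ℝ)) +
      ((s - d) / 2) • ((b : ℝ), ((n - b : ℕ) : ℝ)) + (1 - s) • (0 : ℝ × ℝ) = ((a : ℝ), (b : ℝ)) := by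
    rw [hc]
    ext
    · simp; linear_combination (1 / 2) * hd2 + (1 / 2) * hs2
    · simp; linear_combination (-1 / 2) * hd2 + (1 / 2) * hs2
  rw [e3, e2, h.zero] at this
  have h4 := mul_le_mul_of_nonneg_left this hn.le
  calc _ ≤ _ := h4
    _ = (s * n) * F (((n - b : ℕ) : ℝ), (b : ℝ)) := by ring
    _ = _ := by rw [hs2]

/-- The standard closed triangle. -/
def Std : Set (ℝ × ℝ) := {p | 0 ≤ p.1 ∧ 0 ≤ p.2 ∧ p.1 + p.2 ≤ 1}

/-- The affine function with values `A, B, C` at the vertices of the standard triangle, cut off. -/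
def psi (A B C : ℝ) : ℝ × ℝ → ℝ :=
  Std.indicator (fun q => (1 - q.1 - q.2) * A + q.1 * B + q.2 * C)

lemma isClosed_Std : IsClosed Std := by
  refine IsClosed.inter ?_ (IsClosed.inter ?_ ?_)
  · exact isClosed_le continuous_const continuous_fst
  · exact isClosed_le continuous_const continuous_snd
  · exact isClosed_le (continuous_fst.add continuous_snd) continuous_const

lemma isCompact_Std : IsCompact Std := by
  refine (isCompact_Icc (a := ((0 : ℝ), (0 : ℝ))) (b := (1, 1))).of_isClosed_subset isClosed_Std ?_
  rintro ⟨x, y⟩ ⟨h1, h2, h3⟩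
  simp only at h1 h2 h3
  exact ⟨⟨h1, h2⟩, ⟨by simp only; linarith, by simp only; linarith⟩⟩

lemma psi_integrable (A B C : ℝ) : Integrable (psi A B C) := by
  unfold psi
  rw [integrable_indicator_iff isClosed_Std.measurableSet]
  apply ContinuousOn.integrableOn_compact isCompact_Std
  fun_prop

lemma psi_nonneg {A B C : ℝ} (hA : 0 ≤ A) (hB : 0 ≤ B) (hC : 0 ≤ C) (q : ℝ × ℝ) :
    0 ≤ psi A B C q := by
  apply Set.indicator_nonneg
  rintro ⟨x, y⟩ ⟨h1, h2, h3⟩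
  simp only at *
  have : 0 ≤ 1 - x - y := by linarith
  positivity

lemma psi_integral (A B C : ℝ) : ∫ q, psi A B C q = (A + B + C) / 6 := by
  have h := integral_prod (μ := volume) (ν := volume) (psi A B C) (psi_integrable A B C)
  rw [← Measure.volume_eq_prod] at h
  rw [h]
  have inner : ∀ x : ℝ, ∫ y, psi A B C (x, y) = (Set.Icc (0 : ℝ) 1).indicator
      (fun x => (1 - x) ^ 2 / 2 * A + (1 - x) * x * B + (1 - x) ^ 2 / 2 * C) x := by
    intro x
    by_cases hx : x ∈ Set.Icc (0 : ℝ) 1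
    · rw [Set.indicator_of_mem hx]
      have e : (fun y => psi A B C (x, y)) = (Set.Icc (0 : ℝ) (1 - x)).indicator
          (fun y => (1 - x - y) * A + x * B + y * C) := by
        funext y
        unfold psi
        by_cases hy : y ∈ Set.Icc (0 : ℝ) (1 - x)
        · rw [Set.indicator_of_mem hy, Set.indicator_of_mem]
          exact ⟨hx.1, hy.1, by simp only; linarith [hy.2]⟩
        · rw [Set.indicator_of_notMem hy, Set.indicator_of_notMem]
          rintro ⟨h1, h2, h3⟩
          exact hy ⟨h2, by simp only at h3; linarith⟩
      rw [e, integral_indicator measurableSet_Icc, integral_Icc_eq_integral_Ioc,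
        ← intervalIntegral.integral_of_le (by linarith [hx.2])]
      have e2 : ∀ y : ℝ, (1 - x - y) * A + x * B + y * C =
          ((1 - x) * A + x * B) + y * (C - A) := by intro y; ring
      simp_rw [e2]
      rw [intervalIntegral.integral_add (by simp) (Continuous.intervalIntegrable (by fun_prop) _ _),
        intervalIntegral.integral_mul_const, integral_id, intervalIntegral.integral_const]
      simp
      ring
    · rw [Set.indicator_of_notMem hx]
      have e : (fun y => psi A B C (x, y)) = fun _ => 0 := by
        funext y
        unfold psi
        rw [Set.indicator_of_notMem]
        rintro ⟨h1, h2, h3⟩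
        exact hx ⟨h1, by simp only at h1 h2 h3; linarith⟩
      rw [e]; simp
  simp_rw [inner]
  rw [integral_indicator measurableSet_Icc, integral_Icc_eq_integral_Ioc,
        ← intervalIntegral.integral_of_le (by norm_num)]
  have e2 : ∀ x : ℝ, (1 - x) ^ 2 / 2 * A + (1 - x) * x * B + (1 - x) ^ 2 / 2 * C =
      (A + C) / 2 + (x * (B - A - C) + x ^ 2 * ((A + C) / 2 - B)) := by intro y; ring
  simp_rw [e2]
  rw [intervalIntegral.integral_add (by simp) (Continuous.intervalIntegrable (by fun_prop) _ _),
    intervalIntegral.integral_add (Continuous.intervalIntegrable (by fun_prop) _ _)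
      (Continuous.intervalIntegrable (by fun_prop) _ _),
    intervalIntegral.integral_mul_const, intervalIntegral.integral_mul_const,
    integral_id, integral_pow, intervalIntegral.integral_const]
  simp
  ring

lemma Std_volume : volume Std = ENNReal.ofReal (1 / 2) := by
  have h := psi_integral 1 1 1
  unfold psi at h
  rw [integral_indicator isClosed_Std.measurableSet] at h
  have e : ∀ q : ℝ × ℝ, (1 - q.1 - q.2) * 1 + q.1 * 1 + q.2 * 1 = (1 : ℝ) := by intro q; ring
  simp_rw [e] at h
  rw [setIntegral_const, smul_eq_mul, mul_one] at h
  rw [← ENNReal.ofReal_toReal isCompact_Std.measure_lt_top.ne]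
  congr 1
  rw [← Measure.real, h]; norm_num

lemma Dn_volume {n : ℝ} (hn : 0 < n) : volume (Dn n) = ENNReal.ofReal (3 * n ^ 2 / 2) := by
  set L := Matrix.toLin (Module.Basis.finTwoProd ℝ) (Module.Basis.finTwoProd ℝ)
    !![2 * n, n; n, 2 * n] with hL
  have hdet : LinearMap.det L = 3 * n ^ 2 := by
    rw [hL, LinearMap.det_toLin, Matrix.det_fin_two_of]; ring
  have himg : Dn n = (fun x => (-n, -n) + x) '' (L '' Std) := by
    ext p
    constructor
    · rintro ⟨h1, h2, h3⟩
      refine ⟨p - (-n, -n), ⟨((n + 2 * p.1 - p.2) / (3 * n), (n + 2 * p.2 - p.1) / (3 * n)),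
        ⟨?_, ?_, ?_⟩, ?_⟩, ?_⟩
      · apply div_nonneg <;> linarith
      · apply div_nonneg <;> linarith
      · simp only
        rw [← add_div, div_le_one (by positivity)]
        linarith
      · rw [hL, Matrix.toLin_finTwoProd_apply]
        ext <;> simp <;> field_simp <;> ring
      · simp
    · rintro ⟨_, ⟨q, ⟨h1, h2, h3⟩, rfl⟩, rfl⟩
      rw [hL]
      simp only [Matrix.toLin_finTwoProd_apply]
      refine ⟨?_, ?_, ?_⟩ <;> simp <;> nlinarith
  rw [himg, Set.image_add_left, measure_preimage_add, Measure.addHaar_image_linearMap, hdet,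
    Std_volume, ← ENNReal.ofReal_mul (abs_nonneg _), abs_of_pos (by positivity)]
  congr 1; ring

lemma isCompact_Dn {n : ℝ} : IsCompact (Dn n) := by
  refine (isCompact_Icc (a := ((-n : ℝ), (-n : ℝ))) (b := (n, n))).of_isClosed_subset ?_ ?_
  · refine IsClosed.inter ?_ (IsClosed.inter ?_ ?_)
    · exact isClosed_le (f := fun p : ℝ × ℝ => p.1 + p.2) (g := fun _ => n)
        (by fun_prop) (by fun_prop)
    · exact isClosed_le (f := fun p : ℝ × ℝ => p.2 - 2 * p.1) (g := fun _ => n)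
        (by fun_prop) (by fun_prop)
    · exact isClosed_le (f := fun p : ℝ × ℝ => p.1 - 2 * p.2) (g := fun _ => n)
        (by fun_prop) (by fun_prop)
  · intro p hp
    obtain ⟨⟨h1, h2⟩, h3, h4⟩ := Dn_bdd hp
    exact ⟨⟨h1, h3⟩, ⟨h2, h4⟩⟩

/-- `σ₃` as a linear map. -/
def σL : (ℝ × ℝ) →ₗ[ℝ] (ℝ × ℝ) where
  toFun := σ₃
  map_add' x y := by ext <;> simp [σ₃] <;> ring
  map_smul' c x := by ext <;> simp [σ₃]; ring

lemma σ_cube (x : ℝ × ℝ) : σ₃ (σ₃ (σ₃ x)) = x := by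
  ext
  · simp [σ₃]
  · simp [σ₃]; ring

lemma σ_inj : Function.Injective σ₃ := by
  intro x y h
  rw [← σ_cube x, ← σ_cube y, h]

lemma σ_cont : Continuous σ₃ := by
  unfold σ₃; fun_prop

lemma σ_mp : MeasurePreserving σ₃ volume volume := by
  have hdet : LinearMap.det σL = 1 := by
    have h1 : σL * σL * σL = 1 := by
      apply LinearMap.ext
      intro x
      exact σ_cube x
    have h2 := congrArg LinearMap.det h1
    rw [map_mul, map_mul, map_one] at h2
    have h3 : (LinearMap.det σL - 1) * ((LinearMap.det σL) ^ 2 + LinearMap.det σL + 1) = 0 := by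
      linear_combination h2
    rcases mul_eq_zero.1 h3 with h | h
    · linarith
    · nlinarith [sq_nonneg (LinearMap.det σL + 1 / 2)]
  refine ⟨σ_cont.measurable, ?_⟩
  have := Measure.map_linearMap_addHaar_eq_smul_addHaar (volume : Measure (ℝ × ℝ)) (f := σL)
    (by rw [hdet]; exact one_ne_zero)
  rw [hdet] at this
  simpa using! this

lemma σi_mp (i : ℕ) : MeasurePreserving (σ₃^[i]) volume volume := σ_mp.iterate i

lemma σi_emb (i : ℕ) : MeasurableEmbedding (σ₃^[i]) :=
  (σ_cont.iterate i).measurableEmbedding (σ_inj.iterate i)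

lemma lower_int (A B C : ℝ) (p : ℝ × ℝ) (i : ℕ) :
    Integrable (fun x => psi A B C (σ₃^[i] x - p)) ∧
      ∫ x, psi A B C (σ₃^[i] x - p) = (A + B + C) / 6 := by
  constructor
  · exact (σi_mp i).integrable_comp_of_integrable ((psi_integrable A B C).comp_sub_right p)
  · rw [(σi_mp i).integral_comp (σi_emb i) (fun x => psi A B C (x - p)),
      integral_sub_right_eq_self, psi_integral]

lemma upper_int (A B C : ℝ) (p : ℝ × ℝ) (i : ℕ) :
    Integrable (fun x => psi A B C (p - σ₃^[i] x)) ∧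
      ∫ x, psi A B C (p - σ₃^[i] x) = (A + B + C) / 6 := by
  constructor
  · exact (σi_mp i).integrable_comp_of_integrable ((psi_integrable A B C).comp_sub_left p)
  · rw [(σi_mp i).integral_comp (σi_emb i) (fun x => psi A B C (p - x)),
      integral_sub_left_eq_self, psi_integral]

lemma refl_sum (h : ℕ → ℝ) (n : ℕ) :
    ∑ i ∈ Finset.Ico 1 n, h (min i (n - i)) =
      ∑ i ∈ Finset.Ico 1 n, (if 2 * i < n then 2 else if 2 * i = n then 1 else 0) * h i := by
  have h1 : ∀ i ∈ Finset.Ico 1 n, h (min i (n - i)) =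
      (if 2 * i ≤ n then h i else 0) + (if n < 2 * i then h (n - i) else 0) := by
    intro i hi
    rw [Finset.mem_Ico] at hi
    by_cases hc : 2 * i ≤ n
    · rw [if_pos hc, if_neg (by omega), min_eq_left (by omega), add_zero]
    · rw [if_neg hc, if_pos (by omega), min_eq_right (by omega), zero_add]
  rw [Finset.sum_congr rfl h1, Finset.sum_add_distrib]
  have h2 : ∑ i ∈ Finset.Ico 1 n, (if n < 2 * i then h (n - i) else 0) =
      ∑ i ∈ Finset.Ico 1 n, (if 2 * i < n then h i else 0) := by
    refine Finset.sum_nbij' (fun i => n - i) (fun i => n - i) ?_ ?_ ?_ ?_ ?_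
    · intro i hi; rw [Finset.mem_Ico] at *; omega
    · intro i hi; rw [Finset.mem_Ico] at *; omega
    · intro i hi; rw [Finset.mem_Ico] at *; omega
    · intro i hi; rw [Finset.mem_Ico] at *; omega
    · intro i hi; rw [Finset.mem_Ico] at *
      by_cases hc : n < 2 * i
      · rw [if_pos hc, if_pos (by omega)]
      · rw [if_neg hc, if_neg (by omega)]
  rw [h2, ← Finset.sum_add_distrib]
  refine Finset.sum_congr rfl fun i _ => ?_
  rcases lt_trichotomy (2 * i) n with hc | hc | hc
  · rw [if_pos hc.le, if_pos hc, if_pos hc]; ring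
  · rw [if_pos hc.le, if_neg (by omega), if_neg (by omega), if_pos hc]; ring
  · rw [if_neg (by omega), if_neg (by omega), if_neg (by omega), if_neg (by omega)]; ring

lemma layer_sum (h : ℕ → ℝ) (n : ℕ) :
    ∑ j ∈ Finset.range n, (j : ℝ) * ∑ i ∈ Finset.Ico 1 j, h (min i (j - i)) =
      ∑ i ∈ Finset.Ico 1 n, (if 2 * i < n then (n : ℝ) * (n - 1) - 4 * i ^ 2 else 0) * h i := by
  induction n with
  | zero => simp
  | succ n ih =>
    rw [Finset.sum_range_succ, ih, refl_sum]
    rcases Nat.eq_zero_or_pos n with rfl | hn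
    · simp
    rw [Finset.sum_Ico_succ_top (by omega), if_neg (by omega), zero_mul, add_zero,
      Finset.mul_sum, ← Finset.sum_add_distrib]
    refine Finset.sum_congr rfl fun i _ => ?_
    push_cast
    rcases lt_trichotomy (2 * i) n with hc | hc | hc
    · rw [if_pos hc, if_pos hc, if_pos (by omega)]; ring
    · rw [if_neg (by omega), if_neg (by omega), if_pos hc, if_pos (by omega)]
      have : (n : ℝ) = 2 * i := by exact_mod_cast hc.symm
      rw [this]; ring
    · rw [if_neg (by omega), if_neg (by omega), if_neg (by omega), if_neg (by omega)]; ring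

lemma comb_main (n : ℕ) (hn : 3 ≤ n) (E : ℕ → ℕ → ℝ)
    (hsym : ∀ a b, a + b ≤ n → E a b = E b a)
    (hnn : ∀ i ≤ n, 0 ≤ E (n - i) i) (hle : ∀ i ≤ n, E (n - i) i ≤ E n 0)
    (hb : ∀ a b, 1 ≤ a + b → a + b < n → b ≤ a →
      (n : ℝ) * E a b ≤ ((a : ℝ) + b) * E (n - b) b) :
    (18 * (n : ℝ) + 12) * (∑ j ∈ Finset.range n, ∑ i ∈ Finset.range j, E (j - i) i) +
      ((n : ℝ) ^ 2 - 3 * n + 2) * E n 0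
      ≤ (9 * (n : ℝ) ^ 2 - 9 * n - 6) * (∑ i ∈ Finset.range n, E (n - i) i) +
        (3 * (n : ℝ) ^ 2 + 3 * n + 2) * E n 0 := by
  set h : ℕ → ℝ := fun i => E (n - i) i with hh
  have hn0 : (3 : ℝ) ≤ n := by exact_mod_cast hn
  have h00 : E n 0 = h 0 := by simp [hh]
  have h0nn : 0 ≤ h 0 := hnn 0 (by omega)
  have split : ∀ (j : ℕ) (F : ℕ → ℝ), 1 ≤ j →
      ∑ i ∈ Finset.range j, F i = F 0 + ∑ i ∈ Finset.Ico 1 j, F i := by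
    intro j F hj
    rw [Finset.range_eq_Ico, Finset.sum_eq_sum_Ico_succ_bot (by omega)]
  have hG : ∀ j ∈ Finset.range n, (n : ℝ) * ∑ i ∈ Finset.range j, E (j - i) i ≤
      (j : ℝ) * h 0 + j * ∑ i ∈ Finset.Ico 1 j, h (min i (j - i)) := by
    intro j hj
    rw [Finset.mem_range] at hj
    rcases Nat.eq_zero_or_pos j with rfl | hj0
    · simp
    rw [split j _ hj0, mul_add, Finset.mul_sum, Finset.mul_sum]
    refine add_le_add ?_ (Finset.sum_le_sum ?_)
    · have := hb j 0 (by omega) (by omega) (by omega)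
      simpa [hh] using this
    · intro i hi
      rw [Finset.mem_Ico] at hi
      have hji : ((j - i : ℕ) : ℝ) = (j : ℝ) - i := by
        rw [Nat.cast_sub (by omega)]
      rcases le_total i (j - i) with hc | hc
      · have := hb (j - i) i (by omega) (by omega) hc
        rw [hji] at this
        rw [min_eq_left hc]
        simpa [hh] using this
      · have := hb i (j - i) (by omega) (by omega) hc
        rw [hji] at this
        rw [min_eq_right hc, hsym _ _ (by omega)]
        simpa [hh] using this
  have hU := Finset.sum_le_sum hG
  rw [← Finset.mul_sum, Finset.sum_add_distrib, layer_sum, ← Finset.sum_mul] at hU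
  have hgauss : ∑ j ∈ Finset.range n, (j : ℝ) = n * (n - 1) / 2 := by
    clear_value h
    clear * -
    induction n with
    | zero => simp
    | succ m ih => rw [Finset.sum_range_succ, ih]; push_cast; ring
  rw [hgauss] at hU
  have hGn : ∑ i ∈ Finset.range n, E (n - i) i = h 0 + ∑ i ∈ Finset.Ico 1 n,
      (if 2 * i < n then 2 else if 2 * i = n then 1 else 0) * h i := by
    rw [split n _ (by omega), ← refl_sum]
    congr 1
    refine Finset.sum_congr rfl fun i hi => ?_
    rw [Finset.mem_Ico] at hi
    rcases le_total i (n - i) with hc | hc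
    · rw [min_eq_left hc]
    · rw [min_eq_right hc, hsym _ _ (by omega)]
      simp only [hh]
      congr 1
      omega
  rw [hGn, h00]
  set U := ∑ j ∈ Finset.range n, ∑ i ∈ Finset.range j, E (j - i) i with hUdef
  -- pointwise comparison
  have hpt : ∀ i ∈ Finset.Ico 1 n,
      (18 * (n : ℝ) + 12) * ((if 2 * i < n then (n : ℝ) * (n - 1) - 4 * i ^ 2 else 0) * h i) ≤
      n * (9 * (n : ℝ) ^ 2 - 9 * n - 6) *
        ((if 2 * i < n then 2 else if 2 * i = n then 1 else 0) * h i) +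
        (if 6 * i ≤ n then 12 * (n : ℝ) ^ 2 * h 0 else 0) := by
    intro i hi
    rw [Finset.mem_Ico] at hi
    have hi0 : 0 ≤ h i := hnn i (by omega)
    have hi1 : h i ≤ h 0 := h00 ▸ hle i (by omega)
    have hir : (1 : ℝ) ≤ i := by exact_mod_cast hi.1
    have hco : 0 ≤ 9 * (n : ℝ) ^ 2 - 9 * n - 6 := by nlinarith
    by_cases h2 : 2 * i < n
    · rw [if_pos h2, if_pos h2]
      by_cases h6 : 6 * i ≤ n
      · rw [if_pos h6]
        have : 12 * (n : ℝ) ^ 2 * h i ≤ 12 * (n : ℝ) ^ 2 * h 0 := by gcongr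
        have h3 : 0 ≤ (72 * (n : ℝ) + 48) * i ^ 2 * h i := by positivity
        nlinarith
      · rw [if_neg h6]
        have h6' : (n : ℝ) ≤ 6 * i := by
          have : n ≤ 6 * i := by omega
          exact_mod_cast this
        have h3 : 0 ≤ ((72 * (n : ℝ) + 48) * i ^ 2 - 12 * n ^ 2) * h i := by
          apply mul_nonneg _ hi0
          nlinarith [mul_nonneg (by linarith : (0:ℝ) ≤ n) (by nlinarith : (0:ℝ) ≤ 6 * i ^ 2 - n)]
        nlinarith
    · rw [if_neg h2, if_neg h2, if_neg (show ¬ 6 * i ≤ n by omega)]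
      split_ifs
      · have : 0 ≤ n * (9 * (n : ℝ) ^ 2 - 9 * n - 6) * (1 * h i) := by positivity
        linarith
      · simp
  have hs := Finset.sum_le_sum hpt
  rw [← Finset.mul_sum, Finset.sum_add_distrib, ← Finset.mul_sum] at hs
  have hcount : ∑ i ∈ Finset.Ico 1 n, (if 6 * i ≤ n then 12 * (n : ℝ) ^ 2 * h 0 else 0) ≤
      2 * (n : ℝ) ^ 3 * h 0 := by
    rw [← Finset.sum_filter, Finset.sum_const, nsmul_eq_mul]
    have hc : ((Finset.Ico 1 n).filter (fun i => 6 * i ≤ n)).card ≤ n / 6 := by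
      calc _ ≤ (Finset.Icc 1 (n / 6)).card := by
            apply Finset.card_le_card
            intro i hi
            simp only [Finset.mem_filter, Finset.mem_Ico, Finset.mem_Icc] at *
            omega
        _ = n / 6 := by simp
    have hc' : 6 * ((((Finset.Ico 1 n).filter (fun i => 6 * i ≤ n)).card : ℕ) : ℝ) ≤ n := by
      have : 6 * ((Finset.Ico 1 n).filter (fun i => 6 * i ≤ n)).card ≤ n := by omega
      exact_mod_cast this
    have : 0 ≤ 2 * (n : ℝ) ^ 2 * h 0 := by positivity
    nlinarith [mul_le_mul_of_nonneg_right hc' this]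
  set S1 := ∑ i ∈ Finset.Ico 1 n, (if 2 * i < n then (n : ℝ) * (n - 1) - 4 * i ^ 2 else 0) * h i
  set S2 := ∑ i ∈ Finset.Ico 1 n,
      (if 2 * i < n then (2 : ℝ) else if 2 * i = n then 1 else 0) * h i
  have hU2 := mul_le_mul_of_nonneg_left hU (by positivity : (0 : ℝ) ≤ 18 * (n : ℝ) + 12)
  have hpos : (0 : ℝ) < n := by linarith
  refine le_of_mul_le_mul_left ?_ hpos
  have hfin : 0 ≤ (n : ℝ) * h 0 := by positivity
  nlinarith

lemma σi_mem {n : ℝ} (i : ℕ) {p : ℝ × ℝ} (hp : p ∈ Dn n) : σ₃^[i] p ∈ Dn n := by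
  induction i with
  | zero => simpa
  | succ i ih => rw [Function.iterate_succ_apply']; exact σ_mem ih

lemma Good.invi {n : ℝ} {F : ℝ × ℝ → ℝ} (h : Good n F) (i : ℕ) {p : ℝ × ℝ} (hp : p ∈ Dn n) :
    F (σ₃^[i] p) = F p := by
  induction i with
  | zero => simp
  | succ i ih => rw [Function.iterate_succ_apply', h.inv _ (σi_mem i hp), ih]

lemma Good.integrableOn {n : ℝ} (hn : 0 < n) {F : ℝ × ℝ → ℝ} (h : Good n F) :
    IntegrableOn F (Dn n) := by
  have hae : (interior (Dn n) : Set (ℝ × ℝ)) =ᵐ[volume] Dn n :=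
    interior_ae_eq_of_null_frontier ((convex_Dn n).addHaar_frontier volume)
  refine IntegrableOn.congr_set_ae ?_ hae.symm
  refine ⟨h.conv.continuousOn_interior.aestronglyMeasurable isOpen_interior.measurableSet,
    .restrict_of_bounded (C := F (n, 0)) ?_ ?_⟩
  · exact (measure_mono interior_subset).trans_lt isCompact_Dn.measure_lt_top
  · refine (ae_restrict_iff' isOpen_interior.measurableSet).2 (Filter.Eventually.of_forall ?_)
    intro x hx
    have hxm := interior_subset hx
    rw [Real.norm_eq_abs, abs_of_nonneg (h.nonneg hxm)]
    exact h.le_corner hn hxm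

/-- The lower triangle hat at layer `j`, position `i`. -/
def lowT (F : ℝ × ℝ → ℝ) (r : ℕ) (a b : ℕ) (x : ℝ × ℝ) : ℝ :=
  psi (F (a, b)) (F ((a + 1 : ℕ), b)) (F (a, (b + 1 : ℕ))) (σ₃^[r] x - ((a : ℝ), (b : ℝ)))

/-- The upper triangle hat at layer `j`, position `i`. -/
def upT (F : ℝ × ℝ → ℝ) (r : ℕ) (a b : ℕ) (x : ℝ × ℝ) : ℝ :=
  psi (F ((a + 1 : ℕ), (b + 1 : ℕ))) (F (a, (b + 1 : ℕ))) (F ((a + 1 : ℕ), b))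
    ((((a + 1 : ℕ) : ℝ), ((b + 1 : ℕ) : ℝ)) - σ₃^[r] x)

lemma Good.lowT_nonneg {n : ℕ} {F : ℝ × ℝ → ℝ} (h : Good n F) (r : ℕ) {a b : ℕ}
    (hab : a + b + 1 ≤ n) (x : ℝ × ℝ) : 0 ≤ lowT F r a b x :=
  psi_nonneg (h.nonneg (nat_mem (by omega))) (h.nonneg (nat_mem (by omega)))
    (h.nonneg (nat_mem (by omega))) _

lemma Good.upT_nonneg {n : ℕ} {F : ℝ × ℝ → ℝ} (h : Good n F) (r : ℕ) {a b : ℕ}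
    (hab : a + b + 2 ≤ n) (x : ℝ × ℝ) : 0 ≤ upT F r a b x :=
  psi_nonneg (h.nonneg (nat_mem (by omega))) (h.nonneg (nat_mem (by omega)))
    (h.nonneg (nat_mem (by omega))) _

lemma Good.le_lowT {n : ℕ} {F : ℝ × ℝ → ℝ} (h : Good n F) (r : ℕ) {a b : ℕ}
    (hab : a + b + 1 ≤ n) {x : ℝ × ℝ} (hx : x ∈ Dn n)
    (hs : σ₃^[r] x - ((a : ℝ), (b : ℝ)) ∈ Std) : F x ≤ lowT F r a b x := by
  rw [← h.invi r hx]
  unfold lowT psi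
  rw [Set.indicator_of_mem hs]
  set q := σ₃^[r] x - ((a : ℝ), (b : ℝ)) with hq
  obtain ⟨h1, h2, h3⟩ := hs
  have := convex3 h.conv (nat_mem (n := n) (a := a) (b := b) (by omega))
    (nat_mem (n := n) (a := a + 1) (b := b) (by omega))
    (nat_mem (n := n) (a := a) (b := b + 1) (by omega)) (a := 1 - q.1 - q.2) (b := q.1)
    (c := q.2) (by linarith) h1 h2 (by ring)
  refine le_trans (le_of_eq ?_) this
  congr 1
  have hy : σ₃^[r] x = q + ((a : ℝ), (b : ℝ)) := by rw [hq]; simp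
  rw [hy]
  ext <;> simp <;> ring

lemma Good.le_upT {n : ℕ} {F : ℝ × ℝ → ℝ} (h : Good n F) (r : ℕ) {a b : ℕ}
    (hab : a + b + 2 ≤ n) {x : ℝ × ℝ} (hx : x ∈ Dn n)
    (hs : (((a + 1 : ℕ) : ℝ), ((b + 1 : ℕ) : ℝ)) - σ₃^[r] x ∈ Std) : F x ≤ upT F r a b x := by
  rw [← h.invi r hx]
  unfold upT psi
  rw [Set.indicator_of_mem hs]
  set q := (((a + 1 : ℕ) : ℝ), ((b + 1 : ℕ) : ℝ)) - σ₃^[r] x with hq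
  obtain ⟨h1, h2, h3⟩ := hs
  have := convex3 h.conv (nat_mem (n := n) (a := a + 1) (b := b + 1) (by omega))
    (nat_mem (n := n) (a := a) (b := b + 1) (by omega))
    (nat_mem (n := n) (a := a + 1) (b := b) (by omega)) (a := 1 - q.1 - q.2) (b := q.1)
    (c := q.2) (by linarith) h1 h2 (by ring)
  refine le_trans (le_of_eq ?_) this
  congr 1
  have hy : σ₃^[r] x = (((a + 1 : ℕ) : ℝ), ((b + 1 : ℕ) : ℝ)) - q := by rw [hq]; simp
  rw [hy]
  ext <;> simp <;> ring

/-- The sum of all hats. -/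
def hats (F : ℝ × ℝ → ℝ) (n : ℕ) (x : ℝ × ℝ) : ℝ :=
  ∑ r ∈ Finset.range 3,
    ((∑ j ∈ Finset.range n, ∑ i ∈ Finset.range (j + 1), lowT F r (j - i) i x) +
      ∑ j ∈ Finset.range (n - 1), ∑ i ∈ Finset.range (j + 1), upT F r (j - i) i x)

lemma Good.low_sum_nonneg {n : ℕ} {F : ℝ × ℝ → ℝ} (h : Good n F) (r : ℕ) (x : ℝ × ℝ) :
    0 ≤ ∑ j ∈ Finset.range n, ∑ i ∈ Finset.range (j + 1), lowT F r (j - i) i x := by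
  refine Finset.sum_nonneg fun j hj => Finset.sum_nonneg fun i hi => h.lowT_nonneg r ?_ x
  rw [Finset.mem_range] at hi hj
  omega

lemma Good.up_sum_nonneg {n : ℕ} {F : ℝ × ℝ → ℝ} (h : Good n F) (r : ℕ) (x : ℝ × ℝ) :
    0 ≤ ∑ j ∈ Finset.range (n - 1), ∑ i ∈ Finset.range (j + 1), upT F r (j - i) i x := by
  refine Finset.sum_nonneg fun j hj => Finset.sum_nonneg fun i hi => h.upT_nonneg r ?_ x
  rw [Finset.mem_range] at hi hj
  omega

lemma double_single_le (m : ℕ) (f : ℕ → ℕ → ℝ) (hf : ∀ a b, a + b < m → 0 ≤ f a b) {a b : ℕ}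
    (hab : a + b < m) :
    f a b ≤ ∑ j ∈ Finset.range m, ∑ i ∈ Finset.range (j + 1), f (j - i) i := by
  have hnn : ∀ j ∈ Finset.range m, ∀ i ∈ Finset.range (j + 1), 0 ≤ f (j - i) i := by
    intro j hj i hi
    rw [Finset.mem_range] at hi hj
    exact hf _ _ (by omega)
  have h1 := Finset.single_le_sum (f := fun j => ∑ i ∈ Finset.range (j + 1), f (j - i) i)
    (fun j hj => Finset.sum_nonneg (hnn j hj)) (Finset.mem_range.2 hab)
  have h2 := Finset.single_le_sum (f := fun i => f (a + b - i) i)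
    (hnn (a + b) (Finset.mem_range.2 hab)) (a := b) (Finset.mem_range.2 (by omega))
  simp only [Nat.add_sub_cancel] at h2
  exact h2.trans h1

lemma Good.le_hats {n : ℕ} (hn : 1 ≤ n) {F : ℝ × ℝ → ℝ} (h : Good n F) {x : ℝ × ℝ}
    (hx : x ∈ Dn n) : F x ≤ hats F n x := by
  have hsec : ∃ r ∈ Finset.range 3, 0 ≤ (σ₃^[r] x).1 ∧ 0 ≤ (σ₃^[r] x).2 := by
    by_cases h0 : 0 ≤ x.1 ∧ 0 ≤ x.2
    · exact ⟨0, by simp, h0⟩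
    by_cases h1 : 0 ≤ -x.2 ∧ 0 ≤ x.1 - x.2
    · exact ⟨1, by simp, h1⟩
    refine ⟨2, by simp, ?_⟩
    have e : σ₃^[2] x = (-(x.1 - x.2), -x.2 - (x.1 - x.2)) := rfl
    rw [e]
    simp only
    rw [not_and_or, not_le, not_le] at h0 h1
    rcases h0 with h0 | h0 <;> rcases h1 with h1 | h1 <;> constructor <;> linarith
  obtain ⟨r, hr, hy1, hy2⟩ := hsec
  have hterm : ∀ s ∈ Finset.range 3, 0 ≤
      ((∑ j ∈ Finset.range n, ∑ i ∈ Finset.range (j + 1), lowT F s (j - i) i x) +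
      ∑ j ∈ Finset.range (n - 1), ∑ i ∈ Finset.range (j + 1), upT F s (j - i) i x) :=
    fun s _ => add_nonneg (h.low_sum_nonneg s x) (h.up_sum_nonneg s x)
  refine le_trans ?_ (Finset.single_le_sum hterm hr)
  have low : ∀ a b : ℕ, a + b < n → σ₃^[r] x - ((a : ℝ), (b : ℝ)) ∈ Std →
      F x ≤ (∑ j ∈ Finset.range n, ∑ i ∈ Finset.range (j + 1), lowT F r (j - i) i x) +
      ∑ j ∈ Finset.range (n - 1), ∑ i ∈ Finset.range (j + 1), upT F r (j - i) i x := by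
    intro a b hab hs
    have h1 := h.le_lowT r (a := a) (b := b) (by omega) hx hs
    have h2 := double_single_le n (fun a b => lowT F r a b x)
      (fun a b hab => h.lowT_nonneg r (by omega) x) hab
    have h3 := h.up_sum_nonneg r x
    linarith
  have up : ∀ a b : ℕ, a + b < n - 1 →
      (((a + 1 : ℕ) : ℝ), ((b + 1 : ℕ) : ℝ)) - σ₃^[r] x ∈ Std →
      F x ≤ (∑ j ∈ Finset.range n, ∑ i ∈ Finset.range (j + 1), lowT F r (j - i) i x) +
      ∑ j ∈ Finset.range (n - 1), ∑ i ∈ Finset.range (j + 1), upT F r (j - i) i x := by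
    intro a b hab hs
    have h1 := h.le_upT r (a := a) (b := b) (by omega) hx hs
    have h2 := double_single_le (n - 1) (fun a b => upT F r a b x)
      (fun a b hab => h.upT_nonneg r (by omega) x) hab
    have h3 := h.low_sum_nonneg r x
    linarith
  have hyD : σ₃^[r] x ∈ Dn n := σi_mem r hx
  obtain ⟨hyn, -, -⟩ := hyD
  set y := σ₃^[r] x with hy
  set a := ⌊y.1⌋₊ with ha
  set b := ⌊y.2⌋₊ with hb
  have ha1 : (a : ℝ) ≤ y.1 := Nat.floor_le hy1
  have ha2 : y.1 < a + 1 := Nat.lt_floor_add_one _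
  have hb1 : (b : ℝ) ≤ y.2 := Nat.floor_le hy2
  have hb2 : y.2 < b + 1 := Nat.lt_floor_add_one _
  have habn : a + b ≤ n := by
    have : (a : ℝ) + b ≤ n := by linarith
    exact_mod_cast this
  by_cases hfr : y.1 + y.2 ≤ a + b + 1
  · rcases habn.lt_or_eq with hlt | heq
    · refine low a b hlt ⟨?_, ?_, ?_⟩ <;> simp only [Prod.fst_sub, Prod.snd_sub] <;> linarith
    · have heq' : (a : ℝ) + b = n := by exact_mod_cast heq
      by_cases ha0 : 1 ≤ a
      · refine low (a - 1) b (by omega) ?_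
        have hc : ((a - 1 : ℕ) : ℝ) = a - 1 := by rw [Nat.cast_sub ha0]; simp
        refine ⟨?_, ?_, ?_⟩ <;> simp only [Prod.fst_sub, Prod.snd_sub, hc] <;> linarith
      · have hb0 : 1 ≤ b := by omega
        refine low a (b - 1) (by omega) ?_
        have hc : ((b - 1 : ℕ) : ℝ) = b - 1 := by rw [Nat.cast_sub hb0]; simp
        refine ⟨?_, ?_, ?_⟩ <;> simp only [Prod.fst_sub, Prod.snd_sub, hc] <;> linarith
  · push Not at hfr
    refine up a b ?_ ?_
    · have : (a : ℝ) + b + 1 < n := by linarith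
      have : a + b + 1 < n := by exact_mod_cast this
      omega
    · refine ⟨?_, ?_, ?_⟩ <;> simp only [Prod.fst_sub, Prod.snd_sub] <;> push_cast <;> linarith

/-- The weighted vertex sum of the triangulation of one sector. -/
def vsum (E : ℕ → ℕ → ℝ) (n : ℕ) : ℝ :=
  (∑ j ∈ Finset.range n, ∑ i ∈ Finset.range (j + 1),
      (E (j - i) i + E (j - i + 1) i + E (j - i) (i + 1))) +
    ∑ j ∈ Finset.range (n - 1), ∑ i ∈ Finset.range (j + 1),
      (E (j - i + 1) (i + 1) + E (j - i) (i + 1) + E (j - i + 1) i)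

lemma hats_integral (F : ℝ × ℝ → ℝ) (n : ℕ) :
    Integrable (hats F n) ∧ ∫ x, hats F n x = vsum (fun a b => F (a, b)) n / 2 := by
  have hl : ∀ r a b, Integrable (lowT F r a b) := fun r a b => (lower_int _ _ _ _ _).1
  have hu : ∀ r a b, Integrable (upT F r a b) := fun r a b => (upper_int _ _ _ _ _).1
  have hls : ∀ r, Integrable (fun x => ∑ j ∈ Finset.range n, ∑ i ∈ Finset.range (j + 1),
      lowT F r (j - i) i x) := fun r =>
    integrable_finsetSum _ fun j _ => integrable_finsetSum _ fun i _ => hl _ _ _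
  have hus : ∀ r, Integrable (fun x => ∑ j ∈ Finset.range (n - 1), ∑ i ∈ Finset.range (j + 1),
      upT F r (j - i) i x) := fun r =>
    integrable_finsetSum _ fun j _ => integrable_finsetSum _ fun i _ => hu _ _ _
  have hlu : ∀ r ∈ Finset.range 3, Integrable (fun x =>
      (∑ j ∈ Finset.range n, ∑ i ∈ Finset.range (j + 1), lowT F r (j - i) i x) +
      ∑ j ∈ Finset.range (n - 1), ∑ i ∈ Finset.range (j + 1), upT F r (j - i) i x) :=
    fun r _ => (hls r).add (hus r)
  refine ⟨integrable_finsetSum _ hlu, ?_⟩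
  unfold hats
  rw [integral_finsetSum _ hlu]
  have hr : ∀ r ∈ Finset.range 3, ∫ x, ((∑ j ∈ Finset.range n, ∑ i ∈ Finset.range (j + 1),
      lowT F r (j - i) i x) + ∑ j ∈ Finset.range (n - 1), ∑ i ∈ Finset.range (j + 1),
      upT F r (j - i) i x) = vsum (fun a b => F (a, b)) n / 6 := by
    intro r _
    rw [integral_add (hls r) (hus r),
      integral_finsetSum _ fun j _ => integrable_finsetSum _ fun i _ => hl _ _ _,
      integral_finsetSum _ fun j _ => integrable_finsetSum _ fun i _ => hu _ _ _]
    unfold vsum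
    rw [add_div, Finset.sum_div, Finset.sum_div]
    congr 1
    · refine Finset.sum_congr rfl fun j _ => ?_
      rw [integral_finsetSum _ fun i _ => hl _ _ _, Finset.sum_div]
      exact Finset.sum_congr rfl fun i _ => (lower_int _ _ _ _ _).2
    · refine Finset.sum_congr rfl fun j _ => ?_
      rw [integral_finsetSum _ fun i _ => hu _ _ _, Finset.sum_div]
      exact Finset.sum_congr rfl fun i _ => (upper_int _ _ _ _ _).2
  rw [Finset.sum_congr rfl hr, Finset.sum_const, Finset.card_range]
  simp only [nsmul_eq_mul]
  push_cast
  ring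

lemma Good.integral_le {n : ℕ} (hn : 1 ≤ n) {F : ℝ × ℝ → ℝ} (h : Good n F) :
    ∫ x in Dn n, F x ≤ vsum (fun a b => F (a, b)) n / 2 := by
  rw [← (hats_integral F n).2, ← integral_indicator isCompact_Dn.measurableSet]
  have hnn : ∀ x, 0 ≤ hats F n x := fun x =>
    Finset.sum_nonneg fun s _ => add_nonneg (h.low_sum_nonneg s x) (h.up_sum_nonneg s x)
  refine integral_mono_of_nonneg (Filter.Eventually.of_forall ?_) (hats_integral F n).1
    (Filter.Eventually.of_forall ?_)
  · exact fun x => Set.indicator_nonneg (fun y hy => h.nonneg hy) x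
  · exact fun x => Set.indicator_apply_le' (fun hx => h.le_hats hn hx) (fun _ => hnn x)

lemma vsum_eq (E : ℕ → ℕ → ℝ) (n : ℕ) (hn : 1 ≤ n) (h0 : E 0 0 = 0)
    (hsym : ∀ a b, a + b ≤ n → E a b = E b a) :
    vsum E n = 6 * (∑ j ∈ Finset.range n, ∑ i ∈ Finset.range j, E (j - i) i) +
      3 * (∑ i ∈ Finset.range n, E (n - i) i) - E n 0 := by
  set G : ℕ → ℝ := fun j => ∑ i ∈ Finset.range j, E (j - i) i with hG
  have g1 : ∀ j, ∑ i ∈ Finset.range (j + 1), E (j - i + 1) i = G (j + 1) := by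
    intro j
    refine Finset.sum_congr rfl fun i hi => ?_
    rw [Finset.mem_range] at hi
    congr 1; omega
  have g2 : ∀ j, j < n → ∑ i ∈ Finset.range (j + 1), E (j - i) (i + 1) = G (j + 1) := by
    intro j hj
    rw [← g1, ← Finset.sum_range_reflect]
    refine Finset.sum_congr rfl fun i hi => ?_
    rw [Finset.mem_range] at hi
    rw [hsym _ _ (by omega)]
    congr 1 <;> omega
  have g3 : ∀ j, j < n → ∑ i ∈ Finset.range (j + 1), E (j - i) i = G j + E j 0 := by
    intro j hj
    rw [Finset.sum_range_succ, Nat.sub_self, hsym 0 j (by omega)]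
  have g4 : ∀ j, ∑ i ∈ Finset.range (j + 1), E (j - i + 1) (i + 1) = G (j + 2) - E (j + 2) 0 := by
    intro j
    have : G (j + 2) = ∑ i ∈ Finset.range (j + 1), E (j + 2 - (i + 1)) (i + 1) + E (j + 2) 0 := by
      simp only [hG]
      rw [Finset.sum_range_succ', Nat.sub_zero]
    rw [this, add_sub_cancel_right]
    refine Finset.sum_congr rfl fun i hi => ?_
    rw [Finset.mem_range] at hi
    congr 1; omega
  have e1 : vsum E n = ∑ j ∈ Finset.range n, (G j + E j 0 + 2 * G (j + 1)) +
      ∑ j ∈ Finset.range (n - 1), (G (j + 2) - E (j + 2) 0 + 2 * G (j + 1)) := by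
    unfold vsum
    congr 1
    · refine Finset.sum_congr rfl fun j hj => ?_
      rw [Finset.mem_range] at hj
      rw [Finset.sum_add_distrib, Finset.sum_add_distrib, g1, g2 j hj, g3 j hj]; ring
    · refine Finset.sum_congr rfl fun j hj => ?_
      rw [Finset.mem_range] at hj
      rw [Finset.sum_add_distrib, Finset.sum_add_distrib, g1, g2 j (by omega), g4]; ring
  rw [e1]
  have hG0 : G 0 = 0 := by simp [hG]
  have hG1 : G 1 = E 1 0 := by simp [hG]
  change _ = 6 * (∑ j ∈ Finset.range n, G j) + 3 * G n - E n 0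
  clear_value G
  clear * - hn h0 hG0 hG1
  induction n, hn using Nat.le_induction with
  | base => simp [hG0, h0, hG1]; ring
  | succ m hm ih =>
    obtain ⟨l, rfl⟩ : ∃ l, m = l + 1 := ⟨m - 1, by omega⟩
    simp only [Nat.add_sub_cancel] at ih ⊢
    rw [Finset.sum_range_succ _ (l + 1),
      Finset.sum_range_succ (fun j => G (j + 2) - E (j + 2) 0 + 2 * G (j + 1)) l,
      Finset.sum_range_succ G (l + 1)]
    linarith

/-- Integer version of `σ₃^[r] (a, b)` for `r < 3`. -/
def ptZ (r : ℕ) (a b : ℤ) : ℤ × ℤ :=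
  if r = 0 then (a, b) else if r = 1 then (-b, a - b) else (b - a, -a)

/-- The inclusion of integer points. -/
def castZ (q : ℤ × ℤ) : ℝ × ℝ := ((q.1 : ℝ), (q.2 : ℝ))

lemma castZ_inj : Function.Injective castZ := by
  rintro ⟨a, b⟩ ⟨c, d⟩ h
  simp only [castZ, Prod.mk.injEq, Int.cast_inj] at h
  ext <;> simp [h]

lemma castZ_ptZ (r : ℕ) (hr : r < 3) (a b : ℕ) :
    castZ (ptZ r a b) = σ₃^[r] ((a : ℝ), (b : ℝ)) := by
  interval_cases r
  · simp [castZ, ptZ]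
  · simp [castZ, ptZ, σ₃]
  · simp [castZ, ptZ, σ₃]; ring

/-- Index set of nonzero lattice points. -/
def idx (n : ℕ) : Finset (ℕ × (_ : ℕ) × ℕ) :=
  Finset.range 3 ×ˢ (Finset.range (n + 1)).sigma (fun j => Finset.range j)

/-- The lattice points of `Dn n`. -/
def latF (n : ℕ) : Finset (ℤ × ℤ) :=
  insert (0, 0) ((idx n).image (fun t => ptZ t.1 ((t.2.1 - t.2.2 : ℕ) : ℤ) (t.2.2 : ℤ)))

lemma mem_latF (n : ℕ) (x y : ℤ) :
    (x, y) ∈ latF n ↔ x + y ≤ n ∧ y - 2 * x ≤ n ∧ x - 2 * y ≤ n := by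
  unfold latF idx
  simp only [Finset.mem_insert, Finset.mem_image, Finset.mem_product, Finset.mem_sigma,
    Finset.mem_range, Prod.exists, Sigma.exists, Prod.mk.injEq]
  constructor
  · rintro (⟨rfl, rfl⟩ | ⟨r, j, i, ⟨hr, hj, hi⟩, h⟩)
    · simp
    · unfold ptZ at h
      split_ifs at h <;> simp only [Prod.mk.injEq] at h <;> omega
  · rintro ⟨h1, h2, h3⟩
    by_cases c0 : 0 < x ∧ 0 ≤ y
    · refine Or.inr ⟨0, (x + y).toNat, y.toNat, ⟨by omega, by omega, by omega⟩, ?_⟩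
      simp only [ptZ, if_true, Prod.mk.injEq]
      omega
    by_cases c1 : x ≤ 0 ∧ x < y
    · refine Or.inr ⟨1, (y - 2 * x).toNat, (-x).toNat, ⟨by omega, by omega, by omega⟩, ?_⟩
      simp only [ptZ, if_true, if_neg one_ne_zero, Prod.mk.injEq]
      omega
    by_cases c2 : y < 0 ∧ y ≤ x
    · refine Or.inr ⟨2, (x - 2 * y).toNat, (x - y).toNat, ⟨by omega, by omega, by omega⟩, ?_⟩
      simp only [ptZ, if_neg (show ¬ (2 = 0) by norm_num), if_neg (show ¬ (2 = 1) by norm_num),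
        Prod.mk.injEq]
      omega
    · left; omega

lemma latF_coe (n : ℕ) : ((latF n).image castZ : Set (ℝ × ℝ)) = Dn n ∩ lat := by
  ext p
  simp only [Finset.coe_image, Set.mem_image, Finset.mem_coe, Set.mem_inter_iff]
  have key : ∀ x y : ℤ, (x, y) ∈ latF n ↔ castZ (x, y) ∈ Dn n := by
    intro x y
    rw [mem_latF]
    unfold Dn castZ
    simp only [Set.mem_setOf_eq]
    refine and_congr ?_ (and_congr ?_ ?_) <;> norm_cast
  constructor
  · rintro ⟨⟨x, y⟩, h, rfl⟩
    exact ⟨(key x y).1 h, x, y, rfl⟩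
  · rintro ⟨h, x, y, rfl⟩
    exact ⟨(x, y), (key x y).2 h, rfl⟩

lemma latF_sum (n : ℕ) (f : ℝ × ℝ → ℝ) :
    ∑ p ∈ (latF n).image castZ, f p = f 0 + ∑ r ∈ Finset.range 3,
      ∑ j ∈ Finset.range (n + 1), ∑ i ∈ Finset.range j, f (σ₃^[r] (((j - i : ℕ) : ℝ), (i : ℝ))) := by
  rw [Finset.sum_image castZ_inj.injOn]
  unfold latF
  rw [Finset.sum_insert, Finset.sum_image]
  · congr 1
    · simp [castZ, Prod.zero_eq_mk]
    · unfold idx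
      rw [Finset.sum_product]
      refine Finset.sum_congr rfl fun r hr => ?_
      rw [Finset.sum_sigma]
      refine Finset.sum_congr rfl fun j hj => Finset.sum_congr rfl fun i hi => ?_
      rw [castZ_ptZ _ (Finset.mem_range.1 hr)]
  · rintro ⟨r, j, i⟩ h ⟨r', j', i'⟩ h' heq
    simp only [idx, Finset.coe_product, Set.mem_prod, Finset.mem_coe, Finset.mem_sigma,
      Finset.mem_range] at h h' heq
    have : r = r' ∧ j = j' ∧ i = i' := by
      unfold ptZ at heq
      split_ifs at heq <;> simp only [Prod.mk.injEq] at heq <;> omega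
    obtain ⟨rfl, rfl, rfl⟩ := this
    rfl
  · simp only [idx, Finset.mem_image, Finset.mem_product, Finset.mem_sigma,
      Finset.mem_range, not_exists, not_and]
    rintro ⟨r, j, i⟩ h heq
    simp only at h heq
    unfold ptZ at heq
    split_ifs at heq <;> simp only [Prod.mk.injEq] at heq <;> omega

lemma lat_card (n : ℕ) : ((Dn n ∩ lat).ncard : ℝ) = 1 + 3 * n * (n + 1) / 2 := by
  rw [← latF_coe, Set.ncard_coe_finset]
  have h := latF_sum n (fun _ => 1)
  rw [Finset.sum_const, nsmul_eq_mul, mul_one] at h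
  rw [h]
  have hg : ∀ m : ℕ, ∑ j ∈ Finset.range (m + 1), ∑ i ∈ Finset.range j, (1 : ℝ) =
      m * (m + 1) / 2 := by
    intro m
    induction m with
    | zero => simp
    | succ m ih => rw [Finset.sum_range_succ, ih]; simp; ring
  rw [Finset.sum_const, hg]
  simp
  ring

lemma lat_finsum (n : ℕ) (f : ℝ × ℝ → ℝ) :
    ∑ᶠ x ∈ Dn n ∩ lat, f x = ∑ p ∈ (latF n).image castZ, f p := by
  rw [← latF_coe, finsum_mem_coe_finset]

lemma Good.lat_sum {n : ℕ} {F : ℝ × ℝ → ℝ} (h : Good n F) :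
    ∑ p ∈ (latF n).image castZ, F p =
      3 * ((∑ j ∈ Finset.range n, ∑ i ∈ Finset.range j, F ((j - i : ℕ), i)) +
        ∑ i ∈ Finset.range n, F ((n - i : ℕ), i)) := by
  rw [latF_sum, h.zero, zero_add, ← Finset.sum_range_succ]
  have : ∀ r ∈ Finset.range 3, ∑ j ∈ Finset.range (n + 1), ∑ i ∈ Finset.range j,
      F (σ₃^[r] (((j - i : ℕ) : ℝ), (i : ℝ))) =
      ∑ j ∈ Finset.range (n + 1), ∑ i ∈ Finset.range j, F (((j - i : ℕ) : ℝ), (i : ℝ)) := by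
    intro r _
    refine Finset.sum_congr rfl fun j hj => Finset.sum_congr rfl fun i hi => ?_
    rw [Finset.mem_range] at hi hj
    exact h.invi r (nat_mem (by omega))
  rw [Finset.sum_congr rfl this, Finset.sum_const, Finset.card_range]
  simp only [nsmul_eq_mul]
  push_cast
  ring

lemma Good.key {n : ℕ} (hn : 3 ≤ n) {F : ℝ × ℝ → ℝ} (h : Good n F) :
    (1 + 3 * (n : ℝ) * (n + 1) / 2) * (∫ x in Dn n, F x) + ((n : ℝ) ^ 2 - 3 * n + 2) / 4 * F (n, 0)
      ≤ (3 * (n : ℝ) ^ 2 / 2) * ∑ p ∈ (latF n).image castZ, F p := by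
  have hn0 : (0 : ℝ) < n := by
    have : 0 < n := by omega
    exact_mod_cast this
  have h1 := h.integral_le (by omega)
  have hsym : ∀ a b : ℕ, a + b ≤ n → F ((a : ℝ), (b : ℝ)) = F ((b : ℝ), (a : ℝ)) := by
    intro a b hab
    exact h.invs _ (nat_mem (a := b) (b := a) (by omega))
  rw [vsum_eq (fun a b => F (a, b)) n (by omega)
    (by have := h.zero; simpa [Prod.zero_eq_mk] using this) hsym] at h1
  have h2 := comb_main n hn (fun a b => F (a, b)) hsym
    (fun i hi => h.nonneg (nat_mem (by omega)))
    (fun i hi => by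
      have := h.le_corner hn0 (nat_mem (n := n) (a := n - i) (b := i) (by omega))
      simpa using this)
    (fun a b _ hab hba => h.radial hab hba)
  rw [h.lat_sum]
  simp only [Nat.cast_zero] at h1 h2
  set U := ∑ j ∈ Finset.range n, ∑ i ∈ Finset.range j, F (((j - i : ℕ) : ℝ), (i : ℝ))
  set G := ∑ i ∈ Finset.range n, F (((n - i : ℕ) : ℝ), (i : ℝ))
  have h3 := mul_le_mul_of_nonneg_left h1
    (by positivity : 0 ≤ 1 + 3 * (n : ℝ) * (n + 1) / 2)
  nlinarith

/-- Ono's criterion for `X₃`: for every `W₃`-invariant `g ∈ PL(Δ₃;k)`, the average of `g`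
over `kΔ₃` is at least the average of `g` over the lattice points of `kΔ₃`, with equality
iff `g` is affine. -/
theorem chow_polystable_X3 (k : ℕ) (hk : 1 ≤ k) (g : ℝ × ℝ → ℝ)
    (hPL : IsPL ((k : ℝ) • Δ₃) g)
    (hinv : ∀ x ∈ (k : ℝ) • Δ₃, g (σ₃ x) = g x ∧ g (sw x) = g x) :
    ((volume ((k : ℝ) • Δ₃)).toReal⁻¹ * (∫ x in (k : ℝ) • Δ₃, g x) ≥
        ((((k : ℝ) • Δ₃) ∩ lat).ncard : ℝ)⁻¹ * ∑ᶠ x ∈ ((k : ℝ) • Δ₃) ∩ lat, g x) ∧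
      ((volume ((k : ℝ) • Δ₃)).toReal⁻¹ * (∫ x in (k : ℝ) • Δ₃, g x) =
          ((((k : ℝ) • Δ₃) ∩ lat).ncard : ℝ)⁻¹ * (∑ᶠ x ∈ ((k : ℝ) • Δ₃) ∩ lat, g x) ↔
        IsAffineOn ((k : ℝ) • Δ₃) g) := by
  have hn3 : 3 ≤ 3 * k := by omega
  rw [D_eq k hk] at hPL hinv ⊢
  obtain ⟨n, hn⟩ : ∃ n : ℕ, n = 3 * k := ⟨_, rfl⟩
  have hnk : (3 * (k : ℝ)) = (n : ℝ) := by rw [hn]; push_cast; ring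
  rw [hnk] at hPL hinv ⊢
  rw [← hn] at hn3
  have hn0 : (0 : ℝ) < n := by
    have : 0 < n := by omega
    exact_mod_cast this
  have hn3' : (3 : ℝ) ≤ n := by exact_mod_cast hn3
  have hconc := PL_concave n (by omega) g hPL
  set F : ℝ × ℝ → ℝ := fun x => g 0 - g x with hF
  have hgood : Good n F := by
    refine ⟨?_, by simp [hF], ?_, ?_⟩
    · have := (convexOn_const (g 0) (convex_Dn (n : ℝ))).sub hconc
      exact this
    · intro x hx; simp only [hF]; rw [(hinv x hx).1]
    · intro x hx; simp only [hF]; rw [(hinv x hx).2]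
  have hV : (volume (Dn (n : ℝ))).toReal = 3 * (n : ℝ) ^ 2 / 2 := by
    rw [Dn_volume hn0, ENNReal.toReal_ofReal (by positivity)]
  have hgF : ∀ x, g x = g 0 - F x := by intro x; simp [hF]
  have hInt : ∫ x in Dn (n : ℝ), g x = 3 * (n : ℝ) ^ 2 / 2 * g 0 - ∫ x in Dn (n : ℝ), F x := by
    have e : ∫ x in Dn (n : ℝ), g x = ∫ x in Dn (n : ℝ), (g 0 - F x) := by
      congr 1; funext x; exact hgF x
    rw [e, integral_sub _ (hgood.integrableOn hn0), setIntegral_const, Measure.real, hV, smul_eq_mul]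
    exact integrableOn_const isCompact_Dn.measure_lt_top.ne
  have hsum : ∑ᶠ x ∈ Dn (n : ℝ) ∩ lat, g x = (1 + 3 * (n : ℝ) * (n + 1) / 2) * g 0 -
      ∑ p ∈ (latF n).image castZ, F p := by
    rw [lat_finsum, ← lat_card n, ← latF_coe, Set.ncard_coe_finset]
    simp only [hF]
    rw [Finset.sum_sub_distrib, Finset.sum_const, nsmul_eq_mul]
    ring
  have hkey := hgood.key hn3
  rw [hV, lat_card, hInt, hsum]
  set I := ∫ x in Dn (n : ℝ), F x
  set S := ∑ p ∈ (latF n).image castZ, F p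
  set V : ℝ := 3 * (n : ℝ) ^ 2 / 2 with hVd
  set N : ℝ := 1 + 3 * (n : ℝ) * (n + 1) / 2 with hNd
  have hVp : 0 < V := by positivity
  have hNp : 0 < N := by positivity
  have hc : 0 < ((n : ℝ) ^ 2 - 3 * n + 2) / 4 := by nlinarith
  have he : 0 ≤ F (n, 0) := hgood.nonneg (Dn_corners hn0.le).2.1
  have hce := mul_nonneg hc.le he
  have e1 : V⁻¹ * (V * g 0 - I) = g 0 - I / V := by field_simp
  have e2 : N⁻¹ * (N * g 0 - S) = g 0 - S / N := by field_simp
  rw [e1, e2]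
  refine ⟨?_, ?_, ?_⟩
  · have : I / V ≤ S / N := by
      rw [div_le_div_iff₀ hVp hNp]; linarith
    linarith
  · intro heq
    have h1 : I / V = S / N := by linarith
    rw [div_eq_div_iff hVp.ne' hNp.ne'] at h1
    have h2 : F (n, 0) = 0 := by
      by_contra hne
      have := mul_pos hc (lt_of_le_of_ne he (Ne.symm hne))
      linarith
    refine ⟨0, g 0, fun x hx => ?_⟩
    have h3 := hgood.nonneg hx
    have h4 := hgood.le_corner hn0 hx
    rw [hgF x]
    simp only [LinearMap.zero_apply]
    linarith
  · rintro ⟨l, c, hl⟩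
    have hz : ∀ x ∈ Dn (n : ℝ), g x = c := by
      intro x hx
      have a1 := hl x hx
      have a2 := hl _ (σ_mem hx)
      have a3 := hl _ (σ_mem (σ_mem hx))
      rw [(hinv _ (σ_mem hx)).1, (hinv _ hx).1] at a3
      rw [(hinv _ hx).1] at a2
      have a4 := congrArg l (σ_sum x)
      simp only [map_add, map_smul, map_zero, smul_eq_mul] at a4
      linarith
    have h0mem : (0 : ℝ × ℝ) ∈ Dn (n : ℝ) := by
      refine ⟨?_, ?_, ?_⟩ <;> simp
    have hF0 : ∀ x ∈ Dn (n : ℝ), F x = 0 := by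
      intro x hx
      simp only [hF]
      rw [hz x hx, hz 0 h0mem, sub_self]
    have hI : I = 0 := setIntegral_eq_zero_of_forall_eq_zero hF0
    have hS : S = 0 := by
      refine Finset.sum_eq_zero fun p hp => hF0 p ?_
      have : p ∈ (((latF n).image castZ : Finset (ℝ × ℝ)) : Set (ℝ × ℝ)) := hp
      rw [latF_coe] at this
      exact this.1
    rw [hI, hS]
    simp
end
end

section
/- Let Δ₄ be the convex hull of {(3,0),(0,3),(−3,0),(0,−3)} in ℝ² and let k ≥ 1 be an integer. For every W₄-invariant function g ∈ PL(Δ₄;k) one has (1/vol(kΔ₄))·∫_{kΔ₄} g dA ≥ (1/|kΔ₄ ∩ ℤ²|)·Σ_{x ∈ kΔ₄ ∩ ℤ²} g(x), with equality if and only if g is affine on kΔ₄. -/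
open MeasureTheory Pointwise

noncomputable section

/-- The moment polytope of the intersection of two quadrics `X₄`. -/
def Δ₄ : Set (ℝ × ℝ) := convexHull ℝ {((3 : ℝ), (0 : ℝ)), (0, 3), (-3, 0), (0, -3)}

/-- The generator `[[0,-1],[1,0]]` of the Weyl group `W₄`, acting on `ℝ²`. -/
def σ₄ : ℝ × ℝ → ℝ × ℝ := fun p => (-p.2, p.1)

/-- Half-open shell sum in the first quadrant. -/
def shellSum (f : ℕ → ℕ → ℝ) (j : ℕ) : ℝ := ∑ i ∈ Finset.range j, f i (j - i)

lemma shell_S1 (f : ℕ → ℕ → ℝ) (m : ℕ) :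
    ∑ p ∈ Finset.HasAntidiagonal.antidiagonal m, f p.1 p.2 = shellSum f m + f m 0 := by
  rw [Finset.Nat.sum_antidiagonal_eq_sum_range_succ f, Finset.sum_range_succ, shellSum]
  simp

lemma shell_S2 (f : ℕ → ℕ → ℝ) (m : ℕ) :
    ∑ p ∈ Finset.HasAntidiagonal.antidiagonal m, f p.1 (p.2 + 1) = shellSum f (m + 1) := by
  rw [Finset.Nat.sum_antidiagonal_eq_sum_range_succ (fun i j => f i (j + 1)), shellSum]
  refine Finset.sum_congr rfl fun k hk => ?_
  rw [Finset.mem_range] at hk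
  congr 1
  omega

lemma shell_S3 (f : ℕ → ℕ → ℝ) (hs : ∀ i j, f i j = f j i) (m : ℕ) :
    ∑ p ∈ Finset.HasAntidiagonal.antidiagonal m, f (p.1 + 1) p.2 = shellSum f (m + 1) := by
  rw [← shell_S2, ← Finset.Nat.sum_antidiagonal_swap]
  refine Finset.sum_congr rfl fun k _ => ?_
  simp [hs]

lemma shell_S4 (f : ℕ → ℕ → ℝ) (hs : ∀ i j, f i j = f j i) (m : ℕ) :
    ∑ p ∈ Finset.HasAntidiagonal.antidiagonal m, f (p.1 + 1) (p.2 + 1)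
      = shellSum f (m + 2) - f (m + 2) 0 := by
  rw [Finset.Nat.sum_antidiagonal_eq_sum_range_succ (fun i j => f (i + 1) (j + 1)), shellSum,
    Finset.sum_range_succ' _ (m + 1), hs (m + 2) 0]
  simp only [Nat.sub_zero]
  rw [eq_sub_iff_add_eq, add_left_inj]
  refine Finset.sum_congr rfl fun k hk => ?_
  rw [Finset.mem_range] at hk
  congr 1
  omega

/-- The lower bound attached to a lattice cell. -/
def cellBd (N : ℕ) (f : ℕ → ℕ → ℝ) (p : ℕ × ℕ) : ℝ :=
  if p.1 + p.2 + 2 ≤ N then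
    f p.1 p.2 + f (p.1 + 1) p.2 + f p.1 (p.2 + 1) + f (p.1 + 1) (p.2 + 1)
  else f (p.1 + 1) p.2 + f p.1 (p.2 + 1)

/-- The lattice sum. -/
def latSum (f : ℕ → ℕ → ℝ) (N : ℕ) : ℝ :=
  f 0 0 + 4 * ∑ j ∈ Finset.range N, shellSum f (j + 1)

lemma cell_total_aux (f : ℕ → ℕ → ℝ) (hs : ∀ i j, f i j = f j i) (M : ℕ) :
    ∑ m ∈ Finset.range M, (∑ p ∈ Finset.HasAntidiagonal.antidiagonal m,
      (f p.1 p.2 + f (p.1 + 1) p.2 + f p.1 (p.2 + 1) + f (p.1 + 1) (p.2 + 1)))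
      + 2 * shellSum f (M + 1)
    = latSum f (M + 1) - (shellSum f M + f M 0) - (shellSum f (M + 1) + f (M + 1) 0) := by
  induction M with
  | zero =>
    simp [latSum, shellSum, hs 1 0]; ring
  | succ M ih =>
    rw [Finset.sum_range_succ]
    simp only [Finset.sum_add_distrib, shell_S1, shell_S2, shell_S3 f hs, shell_S4 f hs] at ih ⊢
    have : latSum f (M + 1 + 1) = latSum f (M + 1) + 4 * shellSum f (M + 1 + 1) := by
      unfold latSum
      rw [Finset.sum_range_succ _ (M + 1)]
      ring
    rw [this]
    linarith

lemma cell_total (f : ℕ → ℕ → ℝ) (hs : ∀ i j, f i j = f j i) (M : ℕ) :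
    ∑ m ∈ Finset.range (M + 1), ∑ p ∈ Finset.HasAntidiagonal.antidiagonal m, cellBd (M + 1) f p
    = latSum f (M + 1) - (shellSum f M + f M 0) - (shellSum f (M + 1) + f (M + 1) 0) := by
  rw [← cell_total_aux f hs, Finset.sum_range_succ]
  congr 1
  · refine Finset.sum_congr rfl fun m hm => Finset.sum_congr rfl fun p hp => ?_
    rw [Finset.mem_range] at hm
    rw [Finset.HasAntidiagonal.mem_antidiagonal] at hp
    rw [cellBd, if_pos (by omega)]
  · rw [two_mul]
    nth_rewrite 1 [← shell_S3 f hs M]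
    rw [← shell_S2 f M, ← Finset.sum_add_distrib]
    refine Finset.sum_congr rfl fun p hp => ?_
    rw [Finset.HasAntidiagonal.mem_antidiagonal] at hp
    rw [cellBd, if_neg (by omega)]

lemma shell_mono (f : ℕ → ℕ → ℝ) (hs : ∀ i j, f i j = f j i) (N : ℕ)
    (hm : ∀ i j, i + j + 1 ≤ N → f (i + 1) j ≤ f i j) (j : ℕ) (hj : j + 1 ≤ N) :
    (j : ℝ) * shellSum f (j + 1) ≤ (j + 1 : ℝ) * shellSum f j := by
  have key : (j : ℝ) * shellSum f (j + 1) =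
      ∑ i ∈ Finset.range j, (((j : ℝ) - i) * f i (j + 1 - i)
        + ((i : ℝ) + 1) * f (i + 1) (j + 1 - (i + 1))) := by
    rw [Finset.sum_add_distrib]
    have h1 : ∑ i ∈ Finset.range j, ((j : ℝ) - i) * f i (j + 1 - i)
        = ∑ i ∈ Finset.range (j + 1), ((j : ℝ) - i) * f i (j + 1 - i) := by
      rw [Finset.sum_range_succ]; simp
    have h2 : ∑ i ∈ Finset.range j, ((i : ℝ) + 1) * f (i + 1) (j + 1 - (i + 1))
        = ∑ i ∈ Finset.range (j + 1), (i : ℝ) * f i (j + 1 - i) := by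
      rw [Finset.sum_range_succ']; simp
    rw [h1, h2, ← Finset.sum_add_distrib, shellSum, Finset.mul_sum]
    refine Finset.sum_congr rfl fun i _ => ?_
    ring
  rw [key, shellSum, Finset.mul_sum]
  refine Finset.sum_le_sum fun i hi => ?_
  rw [Finset.mem_range] at hi
  have e1 : f i (j + 1 - i) ≤ f i (j - i) := by
    rw [hs i, hs i (j - i), show j + 1 - i = (j - i) + 1 by omega]
    exact hm _ _ (by omega)
  have e2 : f (i + 1) (j + 1 - (i + 1)) ≤ f i (j - i) := by
    rw [show j + 1 - (i + 1) = j - i by omega]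
    exact hm _ _ (by omega)
  have hij : (i : ℝ) ≤ j := by exact_mod_cast hi.le
  have hi0 : (0 : ℝ) ≤ i := by positivity
  nlinarith [mul_le_mul_of_nonneg_left e1 (sub_nonneg.2 hij),
    mul_le_mul_of_nonneg_left e2 (by linarith : (0 : ℝ) ≤ (i : ℝ) + 1)]

/-- Shell averages (index shifted by one). -/
def shellAvg (f : ℕ → ℕ → ℝ) (j : ℕ) : ℝ := shellSum f (j + 1) / (j + 1 : ℝ)

lemma shellAvg_mul (f : ℕ → ℕ → ℝ) (j : ℕ) :
    shellSum f (j + 1) = (j + 1 : ℝ) * shellAvg f j := by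
  unfold shellAvg
  field_simp

lemma shellAvg_succ_le (f : ℕ → ℕ → ℝ) (hs : ∀ i j, f i j = f j i) (N : ℕ)
    (hm : ∀ i j, i + j + 1 ≤ N → f (i + 1) j ≤ f i j) (j : ℕ) (hj : j + 2 ≤ N) :
    shellAvg f (j + 1) ≤ shellAvg f j := by
  have := shell_mono f hs N hm (j + 1) (by omega)
  rw [shellAvg_mul, shellAvg_mul] at this
  push_cast at this
  have hp : (0 : ℝ) < ((j : ℝ) + 1) * ((j : ℝ) + 1 + 1) := by positivity
  refine le_of_mul_le_mul_left ?_ hp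
  linarith

lemma shellAvg_anti (f : ℕ → ℕ → ℝ) (hs : ∀ i j, f i j = f j i) (N : ℕ)
    (hm : ∀ i j, i + j + 1 ≤ N → f (i + 1) j ≤ f i j) (j d : ℕ) (hj : j + d + 1 ≤ N) :
    shellAvg f (j + d) ≤ shellAvg f j := by
  induction d with
  | zero => simp
  | succ d ih =>
    exact (shellAvg_succ_le f hs N hm (j + d) (by omega)).trans (ih (by omega))

lemma comb_main_s1 (f : ℕ → ℕ → ℝ) (hs : ∀ i j, f i j = f j i) (M : ℕ)
    (hm : ∀ i j, i + j + 1 ≤ M + 3 → f (i + 1) j ≤ f i j)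
    (hv : ∀ i j, i + j ≤ M + 3 → f (i + j) 0 ≤ f i j)
    (I : ℝ) (hI : ∑ m ∈ Finset.range (M + 3), ∑ p ∈ Finset.HasAntidiagonal.antidiagonal m,
        cellBd (M + 3) f p ≤ I) :
    f 0 0 - shellAvg f (M + 2) ≤ (2 * ((M : ℝ) + 3) ^ 2 + 2 * ((M : ℝ) + 3) + 1) * I
      - 2 * ((M : ℝ) + 3) ^ 2 * latSum f (M + 3) ∧ shellAvg f (M + 2) ≤ f 0 0 := by
  rw [cell_total f hs (M + 2)] at hI
  have hvert : ∀ j, j + 1 ≤ M + 3 → f (j + 1) 0 ≤ shellAvg f j := by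
    intro j hj
    rw [shellAvg, le_div_iff₀ (by positivity)]
    have : ∑ i ∈ Finset.range (j + 1), f (j + 1) 0 ≤ shellSum f (j + 1) := by
      refine Finset.sum_le_sum fun i hi => ?_
      rw [Finset.mem_range] at hi
      have := hv i (j + 1 - i) (by omega)
      rwa [show i + (j + 1 - i) = j + 1 by omega] at this
    simp at this
    linarith
  have hlow : ((M : ℝ) + 2) * ((M : ℝ) + 3) / 2 * shellAvg f (M + 1) ≤
      ∑ j ∈ Finset.range (M + 2), shellSum f (j + 1) := by
    have : ∑ j ∈ Finset.range (M + 2), ((j : ℝ) + 1) * shellAvg f (M + 1) ≤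
      ∑ j ∈ Finset.range (M + 2), shellSum f (j + 1) := by
      refine Finset.sum_le_sum fun j hj => ?_
      rw [Finset.mem_range] at hj
      rw [shellAvg_mul]
      refine mul_le_mul_of_nonneg_left ?_ (by positivity)
      have := shellAvg_anti f hs (M + 3) hm j (M + 1 - j) (by omega)
      rwa [show j + (M + 1 - j) = M + 1 by omega] at this
    refine le_trans (le_of_eq ?_) this
    rw [← Finset.sum_mul]
    congr 1
    have : ∀ n : ℕ, ∑ j ∈ Finset.range n, ((j : ℝ) + 1) = (n : ℝ) * (n + 1) / 2 := by
      intro n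
      induction n with
      | zero => simp
      | succ n ih => rw [Finset.sum_range_succ, ih]; push_cast; ring
    rw [this]; push_cast; ring
  have h00 : shellAvg f (M + 1) ≤ f 0 0 := by
    have h1 := shellAvg_anti f hs (M + 3) hm 0 (M + 1) (by omega)
    have h2 : shellAvg f 0 = f 1 0 := by simp [shellAvg, shellSum, hs 0 1]
    have h3 := hm 0 0 (by omega)
    rw [zero_add] at h1 h3
    linarith
  have hstep := shellAvg_succ_le f hs (M + 3) hm (M + 1) (by omega)
  have hv1 := hvert (M + 1) (by omega)
  have hv2 := hvert (M + 2) (by omega)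
  have hL : latSum f (M + 3) = f 0 0 + 4 * (∑ j ∈ Finset.range (M + 2), shellSum f (j + 1)
      + shellSum f (M + 3)) := by
    rw [latSum, Finset.sum_range_succ _ (M + 2)]
  have ha1 := shellAvg_mul f (M + 1)
  have ha2 := shellAvg_mul f (M + 2)
  simp only [add_assoc, Nat.reduceAdd] at *
  set L := latSum f (M + 3)
  set A := shellAvg f (M + 1)
  set B := shellAvg f (M + 2)
  push_cast at ha1 ha2
  have hM : (0 : ℝ) ≤ M := by positivity
  generalize (M : ℝ) = x at *
  refine ⟨?_, by linarith⟩
  have hI2 : L - ((x + 3) * A + (x + 4) * B) ≤ I := by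
    rw [ha1, ha2] at hI
    linarith
  have hL2 : f 0 0 + 2 * (x + 2) * (x + 3) * A + 4 * (x + 3) * B ≤ L := by
    rw [hL, ha2]
    linarith
  have k1 := mul_le_mul_of_nonneg_left hI2
    (by positivity : 0 ≤ 2 * (x + 3) ^ 2 + (2 * (x + 3) + 1))
  have k2 := mul_le_mul_of_nonneg_left hL2 (by positivity : 0 ≤ 2 * (x + 3) + 1)
  have k3 : 0 ≤ (2 * x ^ 3 + 14 * x ^ 2 + 29 * x + 15) * (A - B) :=
    mul_nonneg (by positivity) (by linarith)
  have k4 : 0 ≤ (2 * x + 6) * (f 0 0 - A) := mul_nonneg (by positivity) (by linarith)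
  nlinarith

/-- The diamond of radius `N`. -/
def dia (N : ℝ) : Set (ℝ × ℝ) := {p | |p.1| + |p.2| ≤ N}

lemma mem_dia {N : ℝ} {x y : ℝ} : (x, y) ∈ dia N ↔ |x| + |y| ≤ N := Iff.rfl

lemma convex_dia (N : ℝ) : Convex ℝ (dia N) := by
  intro p hp q hq a b ha hb hab
  simp only [dia, Set.mem_ofPred_eq, Prod.fst_add, Prod.smul_fst, Prod.snd_add, Prod.smul_snd,
    smul_eq_mul] at *
  have h1 : |a * p.1 + b * q.1| ≤ a * |p.1| + b * |q.1| := by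
    refine (abs_add_le _ _).trans ?_
    rw [abs_mul, abs_mul, abs_of_nonneg ha, abs_of_nonneg hb]
  have h2 : |a * p.2 + b * q.2| ≤ a * |p.2| + b * |q.2| := by
    refine (abs_add_le _ _).trans ?_
    rw [abs_mul, abs_mul, abs_of_nonneg ha, abs_of_nonneg hb]
  have h3 := mul_le_mul_of_nonneg_left hp ha
  have h4 := mul_le_mul_of_nonneg_left hq hb
  have h5 : a * N + b * N = N := by rw [← add_mul, hab, one_mul]
  linarith

lemma delta_eq : Δ₄ = dia 3 := by
  apply Set.Subset.antisymm
  · refine convexHull_min ?_ (convex_dia 3)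
    rintro p (rfl | rfl | rfl | rfl) <;> norm_num [dia]
  · rintro ⟨x, y⟩ h
    rw [mem_dia] at h
    have hx := abs_nonneg x
    have hy := abs_nonneg y
    have hx1 := neg_abs_le x
    have hx2 := le_abs_self x
    have hy1 := neg_abs_le y
    have hy2 := le_abs_self y
    let w : Fin 4 → ℝ := ![(|x| + x) / 6 + (3 - |x| - |y|) / 12,
      (|y| + y) / 6 + (3 - |x| - |y|) / 12,
      (|x| - x) / 6 + (3 - |x| - |y|) / 12, (|y| - y) / 6 + (3 - |x| - |y|) / 12]
    let z : Fin 4 → ℝ × ℝ := ![(3, 0), (0, 3), (-3, 0), (0, -3)]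
    have h1 : ∀ i ∈ (Finset.univ : Finset (Fin 4)), 0 ≤ w i := by
      intro i _
      fin_cases i <;> simp [w] <;> linarith
    have h2 : ∑ i, w i = 1 := by
      simp only [Fin.sum_univ_four, w, Matrix.cons_val]
      ring
    have h3 : ∀ i ∈ (Finset.univ : Finset (Fin 4)), z i ∈ convexHull ℝ
        ({((3 : ℝ), (0 : ℝ)), (0, 3), (-3, 0), (0, -3)} : Set (ℝ × ℝ)) := by
      intro i _
      apply subset_convexHull
      fin_cases i <;> simp [z]
    have h4 := (convex_convexHull ℝ ({((3 : ℝ), (0 : ℝ)), (0, 3), (-3, 0), (0, -3)} :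
      Set (ℝ × ℝ))).sum_mem h1 h2 h3
    have h5 : ∑ i, w i • z i = (x, y) := by
      simp only [Fin.sum_univ_four, w, z, Matrix.cons_val]
      ext <;> simp <;> ring
    rw [h5] at h4
    exact h4

lemma smul_delta_eq (k : ℕ) (hk : 1 ≤ k) : (k : ℝ) • Δ₄ = dia (3 * k) := by
  have hk0 : (0 : ℝ) < k := by exact_mod_cast hk
  rw [delta_eq]
  ext ⟨x, y⟩
  rw [Set.mem_smul_set_iff_inv_smul_mem₀ hk0.ne']
  simp only [dia, Set.mem_ofPred_eq, Prod.smul_mk, smul_eq_mul, abs_mul, abs_inv, Nat.abs_cast]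
  rw [← mul_add, inv_mul_le_iff₀ hk0, mul_comm]

lemma volume_dia (N : ℝ) (hN : 0 ≤ N) : (volume (dia N)).toReal = 2 * N ^ 2 := by
  let f : (ℝ × ℝ) →ₗ[ℝ] (ℝ × ℝ) :=
    Matrix.toLin (Module.Basis.finTwoProd ℝ) (Module.Basis.finTwoProd ℝ) !![1, 1; 1, -1]
  have hdet : LinearMap.det f = -2 := by
    simp only [f, LinearMap.det_toLin, Matrix.det_fin_two_of]; norm_num
  have hpre : dia N = f ⁻¹' (Set.Icc (-N) N ×ˢ Set.Icc (-N) N) := by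
    ext ⟨x, y⟩
    simp only [f, mem_dia, Set.mem_preimage, Matrix.toLin_finTwoProd_apply, Set.mem_prod,
      Set.mem_Icc]
    constructor
    · intro h
      have := neg_abs_le x
      have := le_abs_self x
      have := neg_abs_le y
      have := le_abs_self y
      refine ⟨⟨?_, ?_⟩, ?_, ?_⟩ <;> linarith
    · rintro ⟨⟨h1, h2⟩, h3, h4⟩
      rcases abs_cases x with ⟨hx, _⟩ | ⟨hx, _⟩ <;> rcases abs_cases y with ⟨hy, _⟩ | ⟨hy, _⟩ <;>
        rw [hx, hy] <;> linarith
  rw [hpre, Measure.addHaar_preimage_linearMap _ (by rw [hdet]; norm_num), hdet,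
    Measure.volume_eq_prod, Measure.prod_prod, Real.volume_Icc, ENNReal.toReal_mul,
    ENNReal.toReal_mul, ENNReal.toReal_ofReal (by positivity), ENNReal.toReal_ofReal (by linarith)]
  norm_num
  ring

lemma isClosed_dia (N : ℝ) : IsClosed (dia N) :=
  isClosed_le (by fun_prop) continuous_const

lemma volume_dia_lt_top (N : ℝ) : volume (dia N) < ⊤ := by
  have hsub : dia N ⊆ Set.Icc (-N) N ×ˢ Set.Icc (-N) N := by
    rintro ⟨x, y⟩ h
    rw [mem_dia] at h
    have := abs_nonneg x
    have := abs_nonneg y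
    exact ⟨abs_le.1 (by linarith), abs_le.1 (by linarith)⟩
  exact lt_of_le_of_lt (measure_mono hsub) ((isCompact_Icc.prod isCompact_Icc).measure_lt_top)

/-- Integer points of the diamond. -/
def intDia (N : ℕ) : Finset (ℤ × ℤ) :=
  (Finset.Icc (-(N : ℤ)) N ×ˢ Finset.Icc (-(N : ℤ)) N).filter fun p => |p.1| + |p.2| ≤ N

lemma mem_intDia {N : ℕ} {p : ℤ × ℤ} : p ∈ intDia N ↔ |p.1| + |p.2| ≤ N := by
  simp only [intDia, Finset.mem_filter, Finset.mem_product, Finset.mem_Icc]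
  constructor
  · exact fun h => h.2
  · intro h
    have h1 := abs_nonneg p.1
    have h2 := abs_nonneg p.2
    exact ⟨⟨abs_le.1 (by linarith), abs_le.1 (by linarith)⟩, h⟩

/-- The embedding of integer points. -/
def toR (p : ℤ × ℤ) : ℝ × ℝ := ((p.1 : ℝ), (p.2 : ℝ))

lemma toR_inj : Function.Injective toR := by
  rintro ⟨a, b⟩ ⟨c, d⟩ h
  simpa [toR] using h

lemma dia_inter_lat (N : ℕ) : dia N ∩ lat = toR '' (intDia N : Set (ℤ × ℤ)) := by
  ext ⟨x, y⟩
  constructor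
  · rintro ⟨h, m, n, hmn⟩
    obtain ⟨rfl, rfl⟩ := Prod.mk.inj hmn
    refine ⟨(m, n), ?_, rfl⟩
    rw [Finset.mem_coe, mem_intDia]
    rw [mem_dia] at h
    exact_mod_cast h
  · rintro ⟨⟨m, n⟩, h, hmn⟩
    obtain ⟨rfl, rfl⟩ := Prod.mk.inj hmn
    rw [Finset.mem_coe, mem_intDia] at h
    refine ⟨?_, m, n, rfl⟩
    rw [mem_dia]
    exact_mod_cast h

lemma finsum_lat (N : ℕ) (g : ℝ × ℝ → ℝ) :
    ∑ᶠ x ∈ dia N ∩ lat, g x = ∑ p ∈ intDia N, g (toR p) := by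
  rw [dia_inter_lat, finsum_mem_image toR_inj.injOn, finsum_mem_coe_finset]

lemma ncard_lat (N : ℕ) : (dia N ∩ lat).ncard = (intDia N).card := by
  rw [dia_inter_lat, Set.ncard_image_of_injective _ toR_inj, Set.ncard_coe_finset]

lemma sum_quadrant (N : ℕ) (F : ℤ × ℤ → ℝ) :
    ∑ p ∈ (intDia N).filter (fun p => 0 ≤ p.1 ∧ 0 < p.2), F p =
      ∑ j ∈ Finset.range N, shellSum (fun a b => F (a, b)) (j + 1) := by
  simp only [shellSum]
  rw [Finset.sum_sigma']
  refine Finset.sum_bij' (fun p _ => ⟨(p.1 + p.2 - 1).toNat, p.1.toNat⟩)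
    (fun q _ => ((q.2 : ℤ), ((q.1 + 1 - q.2 : ℕ) : ℤ))) ?_ ?_ ?_ ?_ ?_
  · rintro ⟨a, b⟩ h
    simp only [Finset.mem_filter, mem_intDia, Finset.mem_sigma, Finset.mem_range] at h ⊢
    obtain ⟨h, h1, h2⟩ := h
    rw [abs_of_nonneg h1, abs_of_pos h2] at h
    omega
  · rintro ⟨a, b⟩ h
    simp only [Finset.mem_filter, mem_intDia, Finset.mem_sigma, Finset.mem_range] at h ⊢
    rw [abs_of_nonneg (by omega), abs_of_nonneg (by omega)]
    omega
  · rintro ⟨a, b⟩ h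
    simp only [Finset.mem_filter, mem_intDia] at h
    simp only [Prod.mk.injEq]
    omega
  · rintro ⟨a, b⟩ h
    simp only [Finset.mem_sigma, Finset.mem_range] at h
    simp only [Sigma.mk.injEq, heq_eq_eq]
    omega
  · rintro ⟨a, b⟩ h
    simp only [Finset.mem_filter, mem_intDia] at h
    congr 1
    simp only [Prod.mk.injEq]
    omega

lemma sum_rot (N : ℕ) (F : ℤ × ℤ → ℝ) (hF : ∀ a b, F (-b, a) = F (a, b))
    (P Q : ℤ × ℤ → Prop) [DecidablePred P] [DecidablePred Q] (h : ∀ a b, Q (-b, a) ↔ P (a, b)) :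
    ∑ p ∈ (intDia N).filter Q, F p = ∑ p ∈ (intDia N).filter P, F p := by
  symm
  refine Finset.sum_bij' (fun p _ => (-p.2, p.1)) (fun p _ => (p.2, -p.1)) ?_ ?_ ?_ ?_ ?_
  · rintro ⟨a, b⟩ hab
    simp only [Finset.mem_filter, mem_intDia] at hab ⊢
    refine ⟨?_, (h a b).2 hab.2⟩
    rw [abs_neg, add_comm]; exact hab.1
  · rintro ⟨a, b⟩ hab
    simp only [Finset.mem_filter, mem_intDia] at hab ⊢
    refine ⟨?_, (h b (-a)).1 (by simpa using hab.2)⟩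
    rw [abs_neg, add_comm]; exact hab.1
  · simp
  · simp
  · rintro ⟨a, b⟩ _
    exact (hF a b).symm

lemma sum_intDia (N : ℕ) (F : ℤ × ℤ → ℝ) (hF : ∀ a b, F (-b, a) = F (a, b)) :
    ∑ p ∈ intDia N, F p = latSum (fun a b => F (a, b)) N := by
  have h2 := sum_rot N F hF (fun p => 0 ≤ p.1 ∧ 0 < p.2) (fun p => p.1 < 0 ∧ 0 ≤ p.2)
    (by intro a b; simp only; omega)
  have h3 := sum_rot N F hF (fun p => p.1 < 0 ∧ 0 ≤ p.2) (fun p => p.1 ≤ 0 ∧ p.2 < 0)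
    (by intro a b; simp only; omega)
  have h4 := sum_rot N F hF (fun p => p.1 ≤ 0 ∧ p.2 < 0) (fun p => 0 < p.1 ∧ p.2 ≤ 0)
    (by intro a b; simp only; omega)
  have h5 : ∑ p ∈ (intDia N).filter (fun p => p = (0, 0)), F p = F (0, 0) := by
    rw [Finset.sum_filter, Finset.sum_ite_eq', if_pos]
    rw [mem_intDia]; simp
  have hsplit : ∑ p ∈ intDia N, F p = ∑ p ∈ (intDia N).filter (fun p => p = (0, 0)), F p
      + ∑ p ∈ (intDia N).filter (fun p => 0 ≤ p.1 ∧ 0 < p.2), F p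
      + ∑ p ∈ (intDia N).filter (fun p => p.1 < 0 ∧ 0 ≤ p.2), F p
      + ∑ p ∈ (intDia N).filter (fun p => p.1 ≤ 0 ∧ p.2 < 0), F p
      + ∑ p ∈ (intDia N).filter (fun p => 0 < p.1 ∧ p.2 ≤ 0), F p := by
    simp only [Finset.sum_filter, ← Finset.sum_add_distrib]
    refine Finset.sum_congr rfl ?_
    rintro ⟨a, b⟩ _
    simp only [Prod.mk.injEq]
    split_ifs <;> first | (exfalso; omega) | simp
  rw [hsplit, h5, h4, h3, h2, sum_quadrant, latSum]
  push_cast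
  ring

lemma card_intDia (N : ℕ) : ((intDia N).card : ℝ) = 2 * (N : ℝ) ^ 2 + 2 * N + 1 := by
  have := sum_intDia N (fun _ => 1) (fun _ _ => rfl)
  simp only [Finset.sum_const, nsmul_eq_mul, mul_one] at this
  rw [this]
  simp only [latSum, shellSum, Finset.sum_const, Finset.card_range, nsmul_eq_mul, mul_one]
  have : ∀ n : ℕ, ∑ j ∈ Finset.range n, ((j + 1 : ℕ) : ℝ) = (n : ℝ) * (n + 1) / 2 := by
    intro n
    induction n with
    | zero => simp
    | succ n ih => rw [Finset.sum_range_succ, ih]; push_cast; ring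
  rw [this]
  ring

lemma isPL_concave (k : ℕ) (hk : 1 ≤ k) (g : ℝ × ℝ → ℝ) (h : IsPL ((k : ℝ) • Δ₄) g) :
    ConcaveOn ℝ ((k : ℝ) • Δ₄) g := by
  obtain ⟨φ, hφ⟩ := h
  set D := (k : ℝ) • Δ₄ with hD
  have hDd : D = dia ((3 * k : ℕ) : ℝ) := by rw [hD, smul_delta_eq k hk]; push_cast; rfl
  set S : Set ((ℝ × ℝ) × ℝ) := {p : (ℝ × ℝ) × ℝ | p.1 ∈ D ∩ lat ∧ p.2 ≤ φ p.1} with hS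
  have hfin : (D ∩ lat).Finite := by
    rw [hDd, dia_inter_lat]
    exact (Finset.finite_toSet _).image _
  obtain ⟨B, hB⟩ := (hfin.image φ).bddAbove
  have hbd : ∀ x, BddAbove {t : ℝ | (x, t) ∈ convexHull ℝ S} := by
    intro x
    refine ⟨B, fun t ht => ?_⟩
    have hsub : convexHull ℝ S ⊆ {p : (ℝ × ℝ) × ℝ | p.2 ≤ B} := by
      refine convexHull_min ?_ ?_
      · rintro p ⟨hp1, hp2⟩
        exact hp2.trans (hB ⟨_, hp1, rfl⟩)
      · exact convex_halfSpace_le (f := fun p : (ℝ × ℝ) × ℝ => p.2)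
          (LinearMap.isLinear (LinearMap.snd ℝ (ℝ × ℝ) ℝ)) B
    exact hsub ht
  have hne : ∀ x ∈ D, {t : ℝ | (x, t) ∈ convexHull ℝ S}.Nonempty := by
    have hconv : Convex ℝ (Prod.fst '' convexHull ℝ S) :=
      (convex_convexHull ℝ S).linear_image (LinearMap.fst ℝ (ℝ × ℝ) ℝ)
    have hsub : D ⊆ Prod.fst '' convexHull ℝ S := by
      rw [hD, Δ₄, ← convexHull_smul]
      refine convexHull_min ?_ hconv
      rintro _ ⟨v, hv, rfl⟩
      have hmem : (k : ℝ) • v ∈ D ∩ lat := by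
        refine ⟨Set.smul_mem_smul_set (subset_convexHull ℝ _ hv), ?_⟩
        rcases hv with rfl | rfl | rfl | rfl
        · exact ⟨k * 3, 0, by simp⟩
        · exact ⟨0, k * 3, by simp⟩
        · exact ⟨-(k * 3), 0, by simp⟩
        · exact ⟨0, -(k * 3), by simp⟩
      exact ⟨((k : ℝ) • v, φ ((k : ℝ) • v)), subset_convexHull ℝ _ ⟨hmem, le_rfl⟩, rfl⟩
    intro x hx
    obtain ⟨⟨y, t⟩, ht, rfl⟩ := hsub hx
    exact ⟨t, ht⟩
  have hDc : Convex ℝ D := by rw [hDd]; exact convex_dia _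
  refine ⟨hDc, ?_⟩
  intro x hx y hy a b ha hb hab
  rw [hφ x hx, hφ y hy, hφ _ (hDc hx hy ha hb hab)]
  refine le_of_forall_pos_sub_le fun ε hε => ?_
  obtain ⟨t, ht, hlt⟩ := exists_lt_of_lt_csSup (hne x hx) (sub_lt_self _ hε)
  obtain ⟨s, hs, hls⟩ := exists_lt_of_lt_csSup (hne y hy) (sub_lt_self _ hε)
  have hm : (a • x + b • y, a • t + b • s) ∈ convexHull ℝ S := by
    have := (convex_convexHull ℝ S) ht hs ha hb hab
    simpa using this
  have h1 := le_csSup (hbd _) hm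
  refine le_trans ?_ h1
  simp only [smul_eq_mul]
  have e1 := mul_le_mul_of_nonneg_left hlt.le ha
  have e2 := mul_le_mul_of_nonneg_left hls.le hb
  have e3 : a * ε + b * ε = ε := by rw [← add_mul, hab, one_mul]
  linarith

section Cells

variable {N : ℝ} {g : ℝ × ℝ → ℝ}

lemma conc_ineq (hc : ConcaveOn ℝ (dia N) g) {x y x' y' : ℝ} (h : |x| + |y| ≤ N)
    (h' : |x'| + |y'| ≤ N) {u : ℝ} (hu : 0 ≤ u) (hu1 : u ≤ 1) {z w : ℝ}
    (hz : z = (1 - u) * x + u * x') (hw : w = (1 - u) * y + u * y') :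
    (1 - u) * g (x, y) + u * g (x', y') ≤ g (z, w) := by
  have := hc.2 (x := (x, y)) h (y := (x', y')) h' (sub_nonneg.2 hu1) hu (by ring)
  subst hz hw
  simpa using this

lemma mono_x (hc : ConcaveOn ℝ (dia N) g)
    (hx : ∀ x y, |x| + |y| ≤ N → g (-x, y) = g (x, y)) {x x' y : ℝ} (h0 : 0 ≤ x) (h1 : x ≤ x')
    (h : |x'| + |y| ≤ N) : g (x', y) ≤ g (x, y) := by
  rcases h0.eq_or_lt with h00 | h00
  · subst h00
    have := conc_ineq hc h (x' := -x') (y' := y) (by rwa [abs_neg]) (u := 1 / 2) (by norm_num)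
      (by norm_num) (z := 0) (w := y) (by ring) (by ring)
    rw [hx x' y h] at this
    linarith
  · have hx'0 : 0 < x' := by linarith
    have := conc_ineq hc h (x' := -x') (y' := y) (by rwa [abs_neg]) (u := (x' - x) / (2 * x'))
      (by apply div_nonneg <;> linarith) (by rw [div_le_one (by linarith)]; linarith)
      (z := x) (w := y) (by field_simp; ring) (by ring)
    rw [hx x' y h] at this
    linarith

lemma mono_y (hc : ConcaveOn ℝ (dia N) g)
    (hx : ∀ x y, |x| + |y| ≤ N → g (-x, y) = g (x, y))
    (hs : ∀ x y, |x| + |y| ≤ N → g (y, x) = g (x, y)) {x y y' : ℝ} (h0 : 0 ≤ y) (h1 : y ≤ y')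
    (h : |x| + |y'| ≤ N) : g (x, y') ≤ g (x, y) := by
  have h2 : |x| + |y| ≤ N := by
    rw [abs_of_nonneg h0]
    rw [abs_of_nonneg (h0.trans h1)] at h
    linarith
  rw [← hs x y' h, ← hs x y h2]
  exact mono_x hc hx h0 h1 (by rwa [add_comm])

lemma two_pt (hc : ConcaveOn ℝ (dia N) g) {x y x' y' : ℝ} (h : |x| + |y| ≤ N)
    (h' : |x'| + |y'| ≤ N) {u : ℝ} (hu : 0 ≤ u) (hu1 : u ≤ 1) {z w z' w' : ℝ}
    (hz : z = (1 - u) * x + u * x') (hw : w = (1 - u) * y + u * y')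
    (hz' : z' = (1 - u) * x' + u * x) (hw' : w' = (1 - u) * y' + u * y) :
    g (x, y) + g (x', y') ≤ g (z, w) + g (z', w') := by
  have h1 := conc_ineq hc h h' hu hu1 hz hw
  have h2 := conc_ineq hc h' h hu hu1 hz' hw'
  linarith

lemma full_cell (hc : ConcaveOn ℝ (dia N) g) {i j s t : ℝ} (hi : 0 ≤ i) (hj : 0 ≤ j)
    (hN : i + j + 2 ≤ N) (hs0 : 0 ≤ s) (hs1 : s ≤ 1) (ht0 : 0 ≤ t) (ht1 : t ≤ 1) :
    g (i, j) + g (i + 1, j) + g (i, j + 1) + g (i + 1, j + 1) ≤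
      g (i + s, j + t) + g (i + 1 - s, j + t) + g (i + s, j + 1 - t)
        + g (i + 1 - s, j + 1 - t) := by
  have key : ∀ a b : ℝ, 0 ≤ a → a ≤ i + 1 → 0 ≤ b → b ≤ j + 1 → |a| + |b| ≤ N := by
    intro a b ha ha' hb hb'
    rw [abs_of_nonneg ha, abs_of_nonneg hb]; linarith
  have h1 := two_pt hc (x := i) (y := j) (x' := i + 1) (y' := j)
    (key _ _ (by linarith) (by linarith) (by linarith) (by linarith))
    (key _ _ (by linarith) (by linarith) (by linarith) (by linarith)) hs0 hs1
    (z := i + s) (w := j) (z' := i + 1 - s) (w' := j) (by ring) (by ring) (by ring) (by ring)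
  have h2 := two_pt hc (x := i) (y := j + 1) (x' := i + 1) (y' := j + 1)
    (key _ _ (by linarith) (by linarith) (by linarith) (by linarith))
    (key _ _ (by linarith) (by linarith) (by linarith) (by linarith)) hs0 hs1
    (z := i + s) (w := j + 1) (z' := i + 1 - s) (w' := j + 1)
    (by ring) (by ring) (by ring) (by ring)
  have h3 := two_pt hc (x := i + s) (y := j) (x' := i + s) (y' := j + 1)
    (key _ _ (by linarith) (by linarith) (by linarith) (by linarith))
    (key _ _ (by linarith) (by linarith) (by linarith) (by linarith)) ht0 ht1
    (z := i + s) (w := j + t) (z' := i + s) (w' := j + 1 - t)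
    (by ring) (by ring) (by ring) (by ring)
  have h4 := two_pt hc (x := i + 1 - s) (y := j) (x' := i + 1 - s) (y' := j + 1)
    (key _ _ (by linarith) (by linarith) (by linarith) (by linarith))
    (key _ _ (by linarith) (by linarith) (by linarith) (by linarith)) ht0 ht1
    (z := i + 1 - s) (w := j + t) (z' := i + 1 - s) (w' := j + 1 - t)
    (by ring) (by ring) (by ring) (by ring)
  linarith

/-- Two bounds for a point of a boundary triangle. -/
lemma tri_pt (hc : ConcaveOn ℝ (dia N) g)
    (hx : ∀ x y, |x| + |y| ≤ N → g (-x, y) = g (x, y))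
    (hs : ∀ x y, |x| + |y| ≤ N → g (y, x) = g (x, y)) {i j s t : ℝ} (hi : 0 ≤ i) (hj : 0 ≤ j)
    (hN : i + j + 1 = N) (hs0 : 0 ≤ s) (ht0 : 0 ≤ t) (hst : s + t ≤ 1) :
    s * g (i + 1, j) + (1 - s) * g (i, j + 1) ≤ g (i + s, j + t) ∧
    (1 - t) * g (i + 1, j) + t * g (i, j + 1) ≤ g (i + s, j + t) := by
  have key : ∀ a b : ℝ, 0 ≤ a → 0 ≤ b → a + b ≤ i + j + 1 → |a| + |b| ≤ N := by
    intro a b ha hb hab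
    rw [abs_of_nonneg ha, abs_of_nonneg hb]; linarith
  have h1 := mono_y hc hx hs (x := i + s) (y := j + t) (y' := j + 1 - s) (by linarith)
    (by linarith) (key _ _ (by linarith) (by linarith) (by linarith))
  have h2 := conc_ineq hc (x := i) (y := j + 1) (x' := i + 1) (y' := j)
    (key _ _ (by linarith) (by linarith) (by linarith))
    (key _ _ (by linarith) (by linarith) (by linarith)) hs0 (by linarith)
    (z := i + s) (w := j + 1 - s) (by ring) (by ring)
  have h3 := mono_x hc hx (x := i + s) (y := j + t) (x' := i + 1 - t) (by linarith)
    (by linarith) (key _ _ (by linarith) (by linarith) (by linarith))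
  have h4 := conc_ineq hc (x := i + 1) (y := j) (x' := i) (y' := j + 1)
    (key _ _ (by linarith) (by linarith) (by linarith))
    (key _ _ (by linarith) (by linarith) (by linarith)) ht0 (by linarith)
    (z := i + 1 - t) (w := j + t) (by ring) (by ring)
  constructor <;> linarith

lemma tri_cell (hc : ConcaveOn ℝ (dia N) g)
    (hx : ∀ x y, |x| + |y| ≤ N → g (-x, y) = g (x, y))
    (hs : ∀ x y, |x| + |y| ≤ N → g (y, x) = g (x, y))
    (h : ℝ × ℝ → ℝ) (hh : ∀ p, 0 ≤ h p) (hg : ∀ x y, |x| + |y| ≤ N → h (x, y) = g (x, y))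
    {i j s t : ℝ} (hi : 0 ≤ i) (hj : 0 ≤ j)
    (hN : i + j + 1 = N) (hs0 : 0 ≤ s) (hs1 : s ≤ 1) (ht0 : 0 ≤ t) (ht1 : t ≤ 1) :
    g (i + 1, j) + g (i, j + 1) ≤
      h (i + s, j + t) + h (i + 1 - s, j + t) + h (i + s, j + 1 - t)
        + h (i + 1 - s, j + 1 - t) := by
  have key : ∀ s t : ℝ, 0 ≤ s → 0 ≤ t → s + t ≤ 1 →
      s * g (i + 1, j) + (1 - s) * g (i, j + 1) ≤ h (i + s, j + t) ∧
      (1 - t) * g (i + 1, j) + t * g (i, j + 1) ≤ h (i + s, j + t) := by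
    intro s t hs0 ht0 hst
    rw [hg _ _ (by rw [abs_of_nonneg (by linarith), abs_of_nonneg (by linarith)]; linarith)]
    exact tri_pt hc hx hs hi hj hN hs0 ht0 hst
  have p1 := hh (i + s, j + t)
  have p2 := hh (i + 1 - s, j + t)
  have p3 := hh (i + s, j + 1 - t)
  have p4 := hh (i + 1 - s, j + 1 - t)
  rw [add_sub_assoc, add_sub_assoc] at *
  rcases le_total (s + t) 1 with h1 | h1 <;> rcases le_total t s with h2 | h2
  · have a := (key s t hs0 ht0 h1).1
    have b := (key (1 - s) t (by linarith) ht0 (by linarith)).1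
    linarith
  · have a := (key s t hs0 ht0 h1).2
    have b := (key s (1 - t) hs0 (by linarith) (by linarith)).2
    linarith
  · have a := (key (1 - s) (1 - t) (by linarith) (by linarith) (by linarith)).2
    have b := (key (1 - s) t (by linarith) ht0 (by linarith)).2
    linarith
  · have a := (key (1 - s) (1 - t) (by linarith) (by linarith) (by linarith)).1
    have b := (key s (1 - t) hs0 (by linarith) (by linarith)).1
    linarith

end Cells

lemma integrableOn_dia {N : ℝ} {g : ℝ × ℝ → ℝ} (hc : ConcaveOn ℝ (dia N) g) (c : ℝ) (hl : ∀ p ∈ dia N, c ≤ g p)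
    (hu : ∀ p ∈ dia N, g p ≤ g (0, 0)) : IntegrableOn g (dia N) := by
  have hae : (interior (dia N) : Set (ℝ × ℝ)) =ᵐ[volume] dia N :=
    interior_ae_eq_of_null_frontier ((convex_dia N).addHaar_frontier volume)
  have hm : AEStronglyMeasurable g (volume.restrict (dia N)) := by
    rw [← Measure.restrict_congr_set hae]
    exact hc.continuousOn_interior.aestronglyMeasurable isOpen_interior.measurableSet
  refine IntegrableOn.of_bound (volume_dia_lt_top N) hm (|c| + |g (0, 0)|) ?_
  refine (ae_restrict_iff' (isClosed_dia N).measurableSet).2 (Filter.Eventually.of_forall ?_)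
  intro p hp
  rw [Real.norm_eq_abs, abs_le]
  have := hl p hp
  have := hu p hp
  have := neg_abs_le c
  have := le_abs_self (g (0, 0))
  have := abs_nonneg c
  have := abs_nonneg (g (0, 0))
  constructor <;> linarith

lemma quad_integral (h : ℝ × ℝ → ℝ) (hi : Integrable h) (ha : ∀ x y, h (|x|, |y|) = h (x, y)) :
    ∫ p, h p = 4 * ∫ p in Set.Ioi (0 : ℝ) ×ˢ Set.Ioi (0 : ℝ), h p := by
  rw [Measure.volume_eq_prod] at hi ⊢
  rw [integral_prod _ hi, setIntegral_prod _ hi.integrableOn]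
  have h1 : ∀ x : ℝ, ∫ y, h (x, y) = 2 * ∫ y in Set.Ioi (0 : ℝ), h (|x|, y) := by
    intro x
    rw [← integral_comp_abs (f := fun y => h (|x|, y))]
    simp only [ha]
  simp only [h1]
  rw [integral_comp_abs (f := fun x => 2 * ∫ y in Set.Ioi (0 : ℝ), h (x, y)),
    integral_const_mul]
  ring

lemma flip_integral (h : ℝ × ℝ → ℝ) (i j : ℝ) :
    ∫ p in Set.Ioo i (i + 1) ×ˢ Set.Ioo j (j + 1), h (2 * i + 1 - p.1, p.2) =
      ∫ p in Set.Ioo i (i + 1) ×ˢ Set.Ioo j (j + 1), h p := by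
  let e : ℝ × ℝ ≃ᵐ ℝ × ℝ := (MeasurableEquiv.subLeft (2 * i + 1)).prodCongr (MeasurableEquiv.refl ℝ)
  have hmp : MeasurePreserving e (volume : Measure (ℝ × ℝ)) volume := by
    have := (Measure.measurePreserving_sub_left (volume : Measure ℝ) (2 * i + 1)).prod
      (MeasurePreserving.id (volume : Measure ℝ))
    exact this
  have hpre : e ⁻¹' (Set.Ioo i (i + 1) ×ˢ Set.Ioo j (j + 1)) =
      Set.Ioo i (i + 1) ×ˢ Set.Ioo j (j + 1) := by
    ext ⟨x, y⟩
    have he : e (x, y) = (2 * i + 1 - x, y) := rfl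
    rw [Set.mem_preimage, he]
    simp only [Set.mem_prod, Set.mem_Ioo]
    constructor <;> rintro ⟨⟨h1, h2⟩, h3⟩ <;> exact ⟨⟨by linarith, by linarith⟩, h3⟩
  have := hmp.setIntegral_preimage_emb e.measurableEmbedding h
    (Set.Ioo i (i + 1) ×ˢ Set.Ioo j (j + 1))
  rw [hpre] at this
  exact this

lemma flip_integral2 (h : ℝ × ℝ → ℝ) (i j : ℝ) :
    ∫ p in Set.Ioo i (i + 1) ×ˢ Set.Ioo j (j + 1), h (p.1, 2 * j + 1 - p.2) =
      ∫ p in Set.Ioo i (i + 1) ×ˢ Set.Ioo j (j + 1), h p := by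
  let e : ℝ × ℝ ≃ᵐ ℝ × ℝ := (MeasurableEquiv.refl ℝ).prodCongr (MeasurableEquiv.subLeft (2 * j + 1))
  have hmp : MeasurePreserving e (volume : Measure (ℝ × ℝ)) volume := by
    have := (MeasurePreserving.id (volume : Measure ℝ)).prod
      (Measure.measurePreserving_sub_left (volume : Measure ℝ) (2 * j + 1))
    exact this
  have hpre : e ⁻¹' (Set.Ioo i (i + 1) ×ˢ Set.Ioo j (j + 1)) =
      Set.Ioo i (i + 1) ×ˢ Set.Ioo j (j + 1) := by
    ext ⟨x, y⟩
    have he : e (x, y) = (x, 2 * j + 1 - y) := rfl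
    rw [Set.mem_preimage, he]
    simp only [Set.mem_prod, Set.mem_Ioo]
    constructor <;> rintro ⟨h3, ⟨h1, h2⟩⟩ <;> exact ⟨h3, ⟨by linarith, by linarith⟩⟩
  have := hmp.setIntegral_preimage_emb e.measurableEmbedding h
    (Set.Ioo i (i + 1) ×ˢ Set.Ioo j (j + 1))
  rw [hpre] at this
  exact this

lemma integrable_flip (h : ℝ × ℝ → ℝ) (hi : Integrable h) (a : ℝ) :
    Integrable (fun p : ℝ × ℝ => h (a - p.1, p.2)) :=
  ((Measure.measurePreserving_sub_left (volume : Measure ℝ) a).prod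
      (MeasurePreserving.id (volume : Measure ℝ))).integrable_comp_of_integrable hi

lemma integrable_flip2 (h : ℝ × ℝ → ℝ) (hi : Integrable h) (a : ℝ) :
    Integrable (fun p : ℝ × ℝ => h (p.1, a - p.2)) :=
  ((MeasurePreserving.id (volume : Measure ℝ)).prod
      (Measure.measurePreserving_sub_left (volume : Measure ℝ) a)).integrable_comp_of_integrable hi

lemma cell_integral (h : ℝ × ℝ → ℝ) (hi : Integrable h) (i j c : ℝ)
    (hb : ∀ s t : ℝ, 0 ≤ s → s ≤ 1 → 0 ≤ t → t ≤ 1 →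
      c ≤ h (i + s, j + t) + h (i + 1 - s, j + t) + h (i + s, j + 1 - t)
        + h (i + 1 - s, j + 1 - t)) :
    c ≤ 4 * ∫ p in Set.Ioo i (i + 1) ×ˢ Set.Ioo j (j + 1), h p := by
  set C := Set.Ioo i (i + 1) ×ˢ Set.Ioo j (j + 1) with hC
  have i1 := integrable_flip h hi (2 * i + 1)
  have i2 := integrable_flip2 h hi (2 * j + 1)
  have i3 : Integrable (fun p : ℝ × ℝ => h (2 * i + 1 - p.1, 2 * j + 1 - p.2)) :=
    integrable_flip2 _ i1 (2 * j + 1)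
  have i4 : Integrable (fun p : ℝ × ℝ => h p + h (2 * i + 1 - p.1, p.2)) := hi.add i1
  have i5 : Integrable (fun p : ℝ × ℝ => h p + h (2 * i + 1 - p.1, p.2)
    + h (p.1, 2 * j + 1 - p.2)) := i4.add i2
  have e1 := flip_integral h i j
  have e2 := flip_integral2 h i j
  have e3 := flip_integral2 (fun p : ℝ × ℝ => h (2 * i + 1 - p.1, p.2)) i j
  rw [← hC] at e1 e2 e3
  have hvol : volume C = 1 := by
    rw [hC, Measure.volume_eq_prod, Measure.prod_prod, Real.volume_Ioo, Real.volume_Ioo]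
    simp
  have hsum : ∫ p in C, (h p + h (2 * i + 1 - p.1, p.2) + h (p.1, 2 * j + 1 - p.2)
      + h (2 * i + 1 - p.1, 2 * j + 1 - p.2)) = 4 * ∫ p in C, h p := by
    rw [integral_add i5.integrableOn i3.integrableOn,
      integral_add i4.integrableOn i2.integrableOn,
      integral_add hi.integrableOn i1.integrableOn, e1, e2]
    simp only at e3
    rw [e3, e1]
    ring
  rw [← hsum]
  have := setIntegral_ge_of_const_le_real (μ := volume) (s := C) (c := c)
    (f := fun p : ℝ × ℝ => h p + h (2 * i + 1 - p.1, p.2) + h (p.1, 2 * j + 1 - p.2)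
      + h (2 * i + 1 - p.1, 2 * j + 1 - p.2)) (measurableSet_Ioo.prod measurableSet_Ioo)
    (by rw [hvol]; simp) ?_ (i5.add i3).integrableOn
  · rw [Measure.real, hvol] at this
    simpa using this
  · rintro ⟨x, y⟩ ⟨⟨h1, h2⟩, h3, h4⟩
    simp only at h1 h2 h3 h4
    have := hb (x - i) (y - j) (by linarith) (by linarith) (by linarith) (by linarith)
    rw [show i + (x - i) = x by ring, show j + (y - j) = y by ring,
      show i + 1 - (x - i) = 2 * i + 1 - x by ring,
      show j + 1 - (y - j) = 2 * j + 1 - y by ring] at this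
    exact this

lemma sum_cells (h : ℝ × ℝ → ℝ) (hi : Integrable h) (hh : ∀ p, 0 ≤ h p) (N : ℕ) :
    ∑ m ∈ Finset.range N, ∑ p ∈ Finset.HasAntidiagonal.antidiagonal m,
      ∫ q in Set.Ioo (p.1 : ℝ) (p.1 + 1) ×ˢ Set.Ioo (p.2 : ℝ) (p.2 + 1), h q ≤
    ∫ p in Set.Ioi (0 : ℝ) ×ˢ Set.Ioi (0 : ℝ), h p := by
  rw [Finset.sum_sigma']
  rw [← integral_biUnion_finset (s := fun x : (_ : ℕ) × ℕ × ℕ =>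
    Set.Ioo (x.2.1 : ℝ) (x.2.1 + 1) ×ˢ Set.Ioo (x.2.2 : ℝ) (x.2.2 + 1))
    _ (fun _ _ => measurableSet_Ioo.prod measurableSet_Ioo) ?_ (fun _ _ => hi.integrableOn)]
  · refine setIntegral_mono_set hi.integrableOn (Filter.Eventually.of_forall hh)
      (Filter.Eventually.of_forall ?_)
    rintro ⟨x, y⟩ hxy
    obtain ⟨q, _, hq⟩ := Set.mem_iUnion₂.1 hxy
    obtain ⟨⟨h1, _⟩, h3, _⟩ := hq
    have a1 : (0 : ℝ) ≤ q.2.1 := by positivity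
    have a2 : (0 : ℝ) ≤ q.2.2 := by positivity
    exact ⟨lt_of_le_of_lt a1 h1, lt_of_le_of_lt a2 h3⟩
  · rintro ⟨m, a, b⟩ hm ⟨m', a', b'⟩ hm' hne
    simp only [Finset.coe_sigma, Set.mem_sigma_iff, Finset.mem_coe, Finset.mem_range,
      Finset.HasAntidiagonal.mem_antidiagonal] at hm hm'
    refine Set.disjoint_left.2 ?_
    rintro ⟨x, y⟩ ⟨⟨h1, h2⟩, h3, h4⟩ ⟨⟨h5, h6⟩, h7, h8⟩
    simp only at h1 h2 h3 h4 h5 h6 h7 h8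
    have c1 : a < a' + 1 := by exact_mod_cast h1.trans h6
    have c2 : a' < a + 1 := by exact_mod_cast h5.trans h2
    have c3 : b < b' + 1 := by exact_mod_cast h3.trans h8
    have c4 : b' < b + 1 := by exact_mod_cast h7.trans h4
    apply hne
    obtain rfl : a = a' := by omega
    obtain rfl : b = b' := by omega
    obtain rfl : m = m' := by omega
    rfl

lemma main_ineq (M : ℕ) (g : ℝ × ℝ → ℝ) (hc : ConcaveOn ℝ (dia ((M + 3 : ℕ) : ℝ)) g)
    (hx : ∀ x y, |x| + |y| ≤ ((M + 3 : ℕ) : ℝ) → g (-x, y) = g (x, y))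
    (hs : ∀ x y, |x| + |y| ≤ ((M + 3 : ℕ) : ℝ) → g (y, x) = g (x, y))
    (hnn : ∀ p ∈ dia ((M + 3 : ℕ) : ℝ), 0 ≤ g p)
    (hint : IntegrableOn g (dia ((M + 3 : ℕ) : ℝ))) :
    ∃ δ : ℝ, 0 ≤ δ ∧ δ ≤ (2 * ((M : ℝ) + 3) ^ 2 + 2 * ((M : ℝ) + 3) + 1)
        * (∫ p in dia ((M + 3 : ℕ) : ℝ), g p)
      - 2 * ((M : ℝ) + 3) ^ 2 * ∑ p ∈ intDia (M + 3), g (toR p) ∧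
      (δ = 0 → g (0, 0) ≤ g (((M + 3 : ℕ) : ℝ), 0)) := by
  set N : ℕ := M + 3 with hN
  have hmeas : MeasurableSet (dia (N : ℝ)) := (isClosed_dia _).measurableSet
  set h : ℝ × ℝ → ℝ := (dia (N : ℝ)).indicator g with hh
  have hg : ∀ x y, |x| + |y| ≤ (N : ℝ) → h (x, y) = g (x, y) := fun x y hxy =>
    Set.indicator_of_mem (s := dia (N : ℝ)) hxy g
  have hg0 : ∀ x y, ¬ (|x| + |y| ≤ (N : ℝ)) → h (x, y) = 0 := fun x y hxy =>
    Set.indicator_of_notMem (s := dia (N : ℝ)) hxy g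
  have hh0 : ∀ p, 0 ≤ h p := fun p => Set.indicator_nonneg hnn p
  have hhi : Integrable h := hint.integrable_indicator hmeas
  have hhx : ∀ x y, h (-x, y) = h (x, y) := by
    intro x y
    by_cases hxy : |x| + |y| ≤ (N : ℝ)
    · rw [hg _ _ hxy, hg _ _ (by rwa [abs_neg]), hx _ _ hxy]
    · rw [hg0 _ _ hxy, hg0 _ _ (by rwa [abs_neg])]
  have hhs : ∀ x y, h (y, x) = h (x, y) := by
    intro x y
    by_cases hxy : |x| + |y| ≤ (N : ℝ)
    · rw [hg _ _ hxy, hg _ _ (by rwa [add_comm]), hs _ _ hxy]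
    · rw [hg0 _ _ hxy, hg0 _ _ (by rwa [add_comm])]
  have hha : ∀ x y, h (|x|, |y|) = h (x, y) := by
    have h1 : ∀ x y, h (|x|, y) = h (x, y) := by
      intro x y
      rcases abs_choice x with e | e <;> rw [e]
      exact hhx x y
    intro x y
    rw [h1, hhs, h1, hhs]
  set f : ℕ → ℕ → ℝ := fun a b => h ((a : ℝ), (b : ℝ)) with hf
  have hfg : ∀ a b : ℕ, a + b ≤ N → f a b = g ((a : ℝ), (b : ℝ)) := by
    intro a b hab
    refine hg _ _ ?_
    rw [Nat.abs_cast, Nat.abs_cast]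
    exact_mod_cast hab
  have hfs : ∀ a b, f a b = f b a := fun a b => hhs _ _
  have hfm : ∀ i j, i + j + 1 ≤ N → f (i + 1) j ≤ f i j := by
    intro i j hij
    rw [hfg _ _ (by omega), hfg _ _ (by omega)]
    refine mono_x hc hx (by positivity) (by push_cast; linarith) ?_
    rw [Nat.abs_cast, Nat.abs_cast]
    exact_mod_cast (by omega : i + 1 + j ≤ N)
  have hfv : ∀ i j, i + j ≤ N → f (i + j) 0 ≤ f i j := by
    intro i j hij
    rcases Nat.eq_zero_or_pos (i + j) with h0 | h0
    · obtain rfl : i = 0 := by omega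
      obtain rfl : j = 0 := by omega
      simp
    have hijr : (i : ℝ) + j ≤ N := by exact_mod_cast hij
    have h0r : (0 : ℝ) < (i : ℝ) + j := by exact_mod_cast h0
    have hi0 : (0 : ℝ) ≤ i := by positivity
    have hj0 : (0 : ℝ) ≤ j := by positivity
    have hb : |(i : ℝ) + j| + |(0 : ℝ)| ≤ N := by
      rw [abs_of_pos h0r, abs_zero]; linarith
    have := conc_ineq hc (x := (i : ℝ) + j) (y := 0) (x' := 0) (y' := (i : ℝ) + j) hb
      (by rwa [add_comm]) (u := (j : ℝ) / (i + j)) (by positivity)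
      (by rw [div_le_one h0r]; linarith) (z := i) (w := j) (by field_simp; ring)
      (by field_simp; ring)
    rw [hs _ _ hb] at this
    rw [hfg _ _ (by omega), hfg _ _ (by omega)]
    push_cast
    linarith
  have hcells : ∑ m ∈ Finset.range N, ∑ p ∈ Finset.HasAntidiagonal.antidiagonal m,
      cellBd N f p ≤ ∫ p in dia (N : ℝ), g p := by
    rw [← integral_indicator hmeas, ← hh, quad_integral h hhi hha]
    refine le_trans ?_ (mul_le_mul_of_nonneg_left (sum_cells h hhi hh0 N) (by norm_num))
    rw [Finset.mul_sum]
    refine Finset.sum_le_sum fun m hm => ?_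
    rw [Finset.mul_sum]
    refine Finset.sum_le_sum fun p hp => ?_
    rw [Finset.mem_range] at hm
    rw [Finset.HasAntidiagonal.mem_antidiagonal] at hp
    obtain ⟨i, j⟩ := p
    simp only at hp ⊢
    refine cell_integral h hhi _ _ _ ?_
    intro s t hs0 hs1 ht0 ht1
    have hi0 : (0 : ℝ) ≤ i := by positivity
    have hj0 : (0 : ℝ) ≤ j := by positivity
    rw [cellBd]
    split_ifs with hcase
    · have hcr : (i : ℝ) + j + 2 ≤ N := by exact_mod_cast hcase
      simp only at hcase ⊢
      have := full_cell hc hi0 hj0 hcr hs0 hs1 ht0 ht1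
      rw [hfg _ _ (by omega), hfg _ _ (by omega), hfg _ _ (by omega), hfg _ _ (by omega)]
      have key : ∀ a b : ℝ, 0 ≤ a → a ≤ i + 1 → 0 ≤ b → b ≤ j + 1 → |a| + |b| ≤ N := by
        intro a b ha ha' hb hb'
        rw [abs_of_nonneg ha, abs_of_nonneg hb]; linarith
      rw [hg _ _ (key _ _ (by linarith) (by linarith) (by linarith) (by linarith)),
        hg _ _ (key _ _ (by linarith) (by linarith) (by linarith) (by linarith)),
        hg _ _ (key _ _ (by linarith) (by linarith) (by linarith) (by linarith)),
        hg _ _ (key _ _ (by linarith) (by linarith) (by linarith) (by linarith))]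
      push_cast
      exact this
    · simp only at hcase ⊢
      have hcr : (i : ℝ) + j + 1 = N := by exact_mod_cast (by omega : i + j + 1 = N)
      rw [hfg _ _ (by omega), hfg _ _ (by omega)]
      push_cast
      exact tri_cell hc hx hs h hh0 hg hi0 hj0 hcr hs0 hs1 ht0 ht1
  obtain ⟨k1, k2⟩ := comb_main_s1 f hfs M hfm hfv _ hcells
  have hlat : ∑ p ∈ intDia N, g (toR p) = latSum f N := by
    have hF := sum_intDia N (fun p => h (toR p)) (by
      intro a b
      simp only [toR, Int.cast_neg]
      rw [hhx, hhs])
    have e1 : ∑ p ∈ intDia N, g (toR p) = ∑ p ∈ intDia N, h (toR p) := by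
      refine Finset.sum_congr rfl fun p hp => ?_
      rw [mem_intDia] at hp
      symm
      refine hg _ _ ?_
      exact_mod_cast hp
    rw [e1, hF]
    simp [toR, hf]
  rw [hlat]
  refine ⟨f 0 0 - shellAvg f (M + 2), by linarith, k1, ?_⟩
  intro hδ
  have hsum : ∑ i ∈ Finset.range (M + 3), (f 0 0 - f i (M + 3 - i)) = 0 := by
    have := shellAvg_mul f (M + 2)
    rw [show shellAvg f (M + 2) = f 0 0 by linarith, shellSum] at this
    rw [Finset.sum_sub_distrib]
    simp only [Finset.sum_const, Finset.card_range, nsmul_eq_mul]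
    push_cast at this ⊢
    rw [show M + 2 + 1 = M + 3 by omega] at this
    linarith
  have hle : ∀ i j, i + j ≤ N → f i j ≤ f 0 0 := by
    have hle0 : ∀ j, j ≤ N → f 0 j ≤ f 0 0 := by
      intro j
      induction j with
      | zero => intro _; exact le_rfl
      | succ j ih =>
        intro hj
        refine le_trans ?_ (ih (by omega))
        rw [hfs 0, hfs 0]
        exact hfm j 0 (by omega)
    intro i
    induction i with
    | zero => intro j hj; exact hle0 j (by omega)
    | succ i ih =>
      intro j hj
      exact (hfm i j (by omega)).trans (ih j (by omega))
  have h0 := (Finset.sum_eq_zero_iff_of_nonneg (fun i hi => by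
    rw [Finset.mem_range] at hi
    have := hle i (M + 3 - i) (by omega)
    linarith)).1 hsum 0 (by simp)
  rw [Nat.sub_zero, hfs 0 (M + 3), hfg _ _ (by omega), hfg _ _ (by omega)] at h0
  simp only [Nat.cast_zero] at h0
  rw [← hN] at h0
  linarith

/-- On the diamond, the vertex value is the minimum and the central value the maximum. -/
lemma dia_bounds {N : ℝ} {g : ℝ × ℝ → ℝ} (hN : 0 < N) (hc : ConcaveOn ℝ (dia N) g)
    (hx : ∀ x y, |x| + |y| ≤ N → g (-x, y) = g (x, y))
    (hs : ∀ x y, |x| + |y| ≤ N → g (y, x) = g (x, y)) (p : ℝ × ℝ) (hp : p ∈ dia N) :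
    g (N, 0) ≤ g p ∧ g p ≤ g (0, 0) := by
  obtain ⟨x, y⟩ := p
  rw [mem_dia] at hp
  have habs : g (|x|, |y|) = g (x, y) := by
    have h1 : ∀ x y, |x| + |y| ≤ N → g (|x|, y) = g (x, y) := by
      intro x y hxy
      rcases abs_choice x with e | e <;> rw [e]
      exact hx x y hxy
    rw [h1 _ _ (by rwa [abs_abs]), ← hs _ _ (by rwa [abs_abs]), h1 _ _ (by rwa [add_comm]),
      hs _ _ hp]
  have hx0 := abs_nonneg x
  have hy0 := abs_nonneg y
  rw [← habs]
  constructor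
  · have h1 := mono_y hc hx hs (x := |x|) (y := |y|) (y' := N - |x|) hy0 (by linarith)
      (by rw [abs_abs, abs_of_nonneg (a := N - |x|) (by linarith)]; linarith)
    have hb : |N| + |(0 : ℝ)| ≤ N := by rw [abs_of_pos hN, abs_zero]; linarith
    have h2 := conc_ineq hc (x := 0) (y := N) (x' := N) (y' := 0) (by rwa [add_comm]) hb
      (u := |x| / N) (by positivity) (by rw [div_le_one hN]; linarith) (z := |x|) (w := N - |x|)
      (by field_simp; ring) (by field_simp; ring)
    rw [hs _ _ hb] at h2
    linarith
  · have h1 := mono_y hc hx hs (x := |x|) (y := 0) (y' := |y|) le_rfl hy0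
      (by rwa [abs_abs, abs_abs])
    have h2 := mono_x hc hx (x := 0) (x' := |x|) (y := 0) le_rfl hx0
      (by rw [abs_abs, abs_zero]; linarith)
    linarith

lemma final_aux (M : ℕ) (g : ℝ × ℝ → ℝ) (hc : ConcaveOn ℝ (dia ((M + 3 : ℕ) : ℝ)) g)
    (hinv : ∀ x ∈ dia ((M + 3 : ℕ) : ℝ), g (σ₄ x) = g x ∧ g (sw x) = g x) :
    ((volume (dia ((M + 3 : ℕ) : ℝ))).toReal⁻¹ * (∫ x in dia ((M + 3 : ℕ) : ℝ), g x) ≥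
        (((dia ((M + 3 : ℕ) : ℝ)) ∩ lat).ncard : ℝ)⁻¹
          * ∑ᶠ x ∈ (dia ((M + 3 : ℕ) : ℝ)) ∩ lat, g x) ∧
      ((volume (dia ((M + 3 : ℕ) : ℝ))).toReal⁻¹ * (∫ x in dia ((M + 3 : ℕ) : ℝ), g x) =
          (((dia ((M + 3 : ℕ) : ℝ)) ∩ lat).ncard : ℝ)⁻¹
            * (∑ᶠ x ∈ (dia ((M + 3 : ℕ) : ℝ)) ∩ lat, g x) ↔
        IsAffineOn (dia ((M + 3 : ℕ) : ℝ)) g) := by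
  have hN : (0 : ℝ) < ((M + 3 : ℕ) : ℝ) := by positivity
  have hs : ∀ x y, |x| + |y| ≤ ((M + 3 : ℕ) : ℝ) → g (y, x) = g (x, y) := fun x y h =>
    (hinv (x, y) h).2
  have hx : ∀ x y, |x| + |y| ≤ ((M + 3 : ℕ) : ℝ) → g (-x, y) = g (x, y) := fun x y h => by
    rw [← hs x y h]
    exact (hinv (y, x) (by rw [mem_dia, add_comm]; exact h)).1
  have hb := dia_bounds hN hc hx hs
  set c : ℝ := g (((M + 3 : ℕ) : ℝ), 0) with hcdef
  have hint : IntegrableOn g (dia ((M + 3 : ℕ) : ℝ)) :=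
    integrableOn_dia hc c (fun p hp => (hb p hp).1) (fun p hp => (hb p hp).2)
  have hfinc : IntegrableOn (fun _ : ℝ × ℝ => c) (dia ((M + 3 : ℕ) : ℝ)) :=
    integrableOn_const (volume_dia_lt_top _).ne
  obtain ⟨δ, hδ0, hδ, hδc⟩ := main_ineq M (fun p => g p - c)
    (by
      have := hc.add (concaveOn_const (-c) hc.1)
      simp only [sub_eq_add_neg]
      exact this)
    (fun x y h => by rw [hx x y h]) (fun x y h => by rw [hs x y h])
    (fun p hp => sub_nonneg.2 (hb p hp).1) (hint.sub hfinc)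
  have hvol := volume_dia ((M + 3 : ℕ) : ℝ) hN.le
  have hcard := card_intDia (M + 3)
  rw [ncard_lat, finsum_lat, hvol, hcard]
  rw [integral_sub hint hfinc, setIntegral_const, Measure.real, hvol,
    Finset.sum_sub_distrib, Finset.sum_const, nsmul_eq_mul, hcard] at hδ
  set I := ∫ x in dia ((M + 3 : ℕ) : ℝ), g x with hI
  set L := ∑ p ∈ intDia (M + 3), g (toR p) with hL
  push_cast at hδ ⊢
  have hV : 0 < 2 * ((M : ℝ) + 3) ^ 2 := by positivity
  have hT : 0 < 2 * ((M : ℝ) + 3) ^ 2 + 2 * ((M : ℝ) + 3) + 1 := by positivity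
  set V := 2 * ((M : ℝ) + 3) ^ 2
  set T := V + 2 * ((M : ℝ) + 3) + 1
  have hδ2 : δ ≤ T * I - V * L := by
    simp only [smul_eq_mul] at hδ
    linarith
  have hdiff : T * I - V * L = T * V * (V⁻¹ * I - T⁻¹ * L) := by
    field_simp
  refine ⟨?_, ?_, ?_⟩
  · have h1 : 0 ≤ T * V * (V⁻¹ * I - T⁻¹ * L) := by rw [← hdiff]; linarith
    have h2 := nonneg_of_mul_nonneg_right h1 (mul_pos hT hV)
    linarith
  · intro heq
    rw [heq, sub_self, mul_zero] at hdiff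
    have hz : δ = 0 := le_antisymm (by linarith) hδ0
    have h0 : g (0, 0) - c ≤ c - c := hδc hz
    refine ⟨0, c, fun x hxm => ?_⟩
    have := hb x (by push_cast; exact hxm)
    rw [LinearMap.zero_apply]
    linarith
  · rintro ⟨l, d, hl0⟩
    have hl : ∀ x ∈ dia ((M + 3 : ℕ) : ℝ), g x = l x + d := by
      push_cast
      exact hl0
    have hconst : ∀ x ∈ dia ((M + 3 : ℕ) : ℝ), g x = d := by
      rintro ⟨x, y⟩ hxy
      have hxy' : (-x, -y) ∈ dia ((M + 3 : ℕ) : ℝ) := by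
        rw [mem_dia, abs_neg, abs_neg]; exact hxy
      have e1 : g (-x, -y) = g (x, y) := by
        rw [mem_dia] at hxy
        rw [hx _ _ (by rwa [abs_neg]), ← hs _ _ (by rwa [abs_neg]),
          hx _ _ (by rwa [add_comm]), hs _ _ hxy]
      have e2 := hl _ hxy
      have e3 := hl _ hxy'
      have e4 : l (-x, -y) = - l (x, y) := by
        rw [← map_neg]; rfl
      linarith
    have hIe : I = V * d := by
      rw [hI, setIntegral_congr_fun (isClosed_dia _).measurableSet hconst, setIntegral_const,
        Measure.real, hvol]
      push_cast
      rfl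
    have hLe : L = T * d := by
      rw [hL, Finset.sum_congr rfl (g := fun _ => d), Finset.sum_const, nsmul_eq_mul, hcard]
      · push_cast; rfl
      · intro p hp
        rw [mem_intDia] at hp
        refine hconst _ ?_
        change |(p.1 : ℝ)| + |(p.2 : ℝ)| ≤ _
        exact_mod_cast hp
    rw [hIe, hLe]
    field_simp

/-- Ono's criterion for `X₄`: for every `W₄`-invariant `g ∈ PL(Δ₄;k)`, the average of `g`
over `kΔ₄` is at least the average of `g` over the lattice points of `kΔ₄`, with equality
iff `g` is affine. -/
theorem chow_polystable_X4 (k : ℕ) (hk : 1 ≤ k) (g : ℝ × ℝ → ℝ)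
    (hPL : IsPL ((k : ℝ) • Δ₄) g)
    (hinv : ∀ x ∈ (k : ℝ) • Δ₄, g (σ₄ x) = g x ∧ g (sw x) = g x) :
    ((volume ((k : ℝ) • Δ₄)).toReal⁻¹ * (∫ x in (k : ℝ) • Δ₄, g x) ≥
        ((((k : ℝ) • Δ₄) ∩ lat).ncard : ℝ)⁻¹ * ∑ᶠ x ∈ ((k : ℝ) • Δ₄) ∩ lat, g x) ∧
      ((volume ((k : ℝ) • Δ₄)).toReal⁻¹ * (∫ x in (k : ℝ) • Δ₄, g x) =
          ((((k : ℝ) • Δ₄) ∩ lat).ncard : ℝ)⁻¹ * (∑ᶠ x ∈ ((k : ℝ) • Δ₄) ∩ lat, g x) ↔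
        IsAffineOn ((k : ℝ) • Δ₄) g) := by
  have hc := isPL_concave k hk g hPL
  obtain ⟨M, hM⟩ : ∃ M, 3 * k = M + 3 := ⟨3 * k - 3, by omega⟩
  have hD : (k : ℝ) • Δ₄ = dia ((M + 3 : ℕ) : ℝ) := by
    rw [smul_delta_eq k hk, ← hM]; push_cast; rfl
  rw [hD] at hc hinv ⊢
  exact final_aux M g hc hinv
end
end
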